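/- arXiv:1811.04188 — 2 statements merged into one kernel-verified Lean document; each statement's English description precedes it below -/
import Mathlib

section
/- Let ℓ ≥ 2, n ≥ 1, m ≥ 0 be integers and let Q(u₀,…,u_m; v₀,v₁,v₂) be a polynomial with constant complex coefficients that is homogeneous of total degree p in the variables (v₀,v₁,v₂), for some p ≥ 0. If Q(ζ(z), ζ'(z), …, ζ^{(m)}(z); Γ(z), Γ^{(n)}(z), Γ^{(ℓn)}(z)) = 0 for every z ∈ ℂ at which ζ and Γ are analytic, then Q is the identically zero polynomial. -/
/-!
At `z = k + 1` put `t = Γ`, `w = Γ^(n) / Γ` and `y = Γ^(ℓ n) / Γ - w ^ ℓ`. With `ψ = Γ' / Γ`,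
`Γ^(r) / Γ = ψ ^ r (1 + (r.choose 2) ψ' / ψ ^ 2 + o(ψ' / ψ ^ 2))`, so that `t = k!`,
`w ~ log (k + 1) ^ n` and `y ~ c log (k + 1) ^ (ℓ n - 2) / (k + 1)` with
`c = (ℓ n).choose 2 - ℓ (n.choose 2) ≠ 0`. A nonzero polynomial in `ζ, …, ζ^(m)` is a nonzero
Dirichlet series, because the coefficient sequences are algebraically independent under Dirichlet
convolution; hence it is equivalent to some `a N ^ (-(k + 1))`. After the substitution
`(v₀, v₁, v₂) = (t, t w, t (y + w ^ ℓ))`, the monomials of `Q` in `(t, w, y)` therefore have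
pairwise distinct growth rates `k! ^ p N ^ (-(k + 1)) (k + 1) ^ (-q) log (k + 1) ^ r`, which are
totally ordered: one of them dominates, and `Q` vanishes at only finitely many `k`.
-/

namespace ZetaGamma

open MvPolynomial

section DerivationCriterion

section Semiring

variable {ι R A M : Type*} [CommSemiring R]

theorem totalDegree_pderiv_lt {P : MvPolynomial ι R} (hP : P.totalDegree ≠ 0) (i : ι) :
    (pderiv i P).totalDegree < P.totalDegree := by
  rw [totalDegree, Finset.sup_lt_iff (Nat.pos_of_ne_zero hP)]
  intro s hs
  rw [mem_support_iff, coeff_pderiv] at hs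
  have hle := le_totalDegree (mem_support_iff.mpr (left_ne_zero_of_mul hs))
  rw [Finsupp.sum_add_index' (fun _ => rfl) (fun _ _ _ => rfl), Finsupp.sum_single_index rfl] at hle
  exact hle

theorem exists_pderiv_ne_zero [NoZeroDivisors R] [CharZero R] {P : MvPolynomial ι R}
    (hP : P.totalDegree ≠ 0) : ∃ i, pderiv i P ≠ 0 := by
  obtain ⟨s, hs, hs0⟩ : ∃ s ∈ P.support, s ≠ 0 := by
    simpa [totalDegree_eq_zero_iff, Finsupp.ext_iff] using hP
  obtain ⟨i, hi⟩ := Finsupp.ne_iff.mp hs0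
  have hsi : s - Finsupp.single i 1 + Finsupp.single i 1 = s :=
    tsub_add_cancel_of_le (by simpa [Nat.one_le_iff_ne_zero] using hi)
  refine ⟨i, fun h => ?_⟩
  have hcoeff := congrArg (coeff (s - Finsupp.single i 1)) h
  rw [coeff_pderiv, hsi, coeff_zero] at hcoeff
  exact mul_ne_zero (mem_support_iff.mp hs) (Nat.cast_add_one_ne_zero _) hcoeff

theorem derivation_aeval [Fintype ι] [CommSemiring A] [Algebra R A] [AddCommMonoid M] [Module A M]
    [Module R M] (D : Derivation R A M) (x : ι → A) (P : MvPolynomial ι R) :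
    D (aeval x P) = ∑ i, aeval x (pderiv i P) • D (x i) := by
  classical
  induction P using MvPolynomial.induction_on with
  | C a => simp
  | add P Q hP hQ => simp only [map_add, hP, hQ, add_smul, Finset.sum_add_distrib]
  | mul_X P j hP =>
    have hpderiv (i : ι) : aeval x (pderiv i (P * X j)) =
        (if i = j then aeval x P else 0) + x j * aeval x (pderiv i P) := by
      rw [pderiv_mul, pderiv_X, Pi.single_comm, add_comm, map_add, map_mul, map_mul, aeval_X,
        mul_comm (x j)]
      split_ifs with h <;> simp [h]
    rw [map_mul, aeval_X, D.leibniz, hP]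
    simp only [hpderiv, add_smul, ite_smul, zero_smul, mul_smul, Finset.sum_add_distrib,
      Finset.smul_sum, Finset.sum_ite_eq', Finset.mem_univ, if_true]

end Semiring

theorem algebraicIndependent_of_linearIndependent_derivation {ι R A M : Type*} [CommRing R]
    [NoZeroDivisors R] [CharZero R] [CommRing A] [Algebra R A] [FaithfulSMul R A] [AddCommGroup M]
    [Module A M] [Module R M] (D : Derivation R A M) {x : ι → A}
    (hx : LinearIndependent A fun i => D (x i)) : AlgebraicIndependent R x := by
  refine algebraicIndependent_of_finite_type fun t ht => ?_
  have := ht.fintype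
  have hxt : LinearIndependent A fun i : t => D (x i) := hx.comp _ Subtype.val_injective
  refine algebraicIndependent_iff.mpr fun P hP => ?_
  induction hd : P.totalDegree using Nat.strong_induction_on generalizing P with
  | _ d ih =>
  subst hd
  by_cases hP0 : P.totalDegree = 0
  · rw [totalDegree_eq_zero_iff_eq_C.mp hP0] at hP ⊢
    rw [algHom_C, ← map_zero (algebraMap R A)] at hP
    rw [FaithfulSMul.algebraMap_injective R A hP, C_0]
  · obtain ⟨i, hi⟩ := exists_pderiv_ne_zero hP0
    have hrel := derivation_aeval D (fun i : t => x i) P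
    rw [hP, map_zero] at hrel
    have hker := Fintype.linearIndependent_iff.mp hxt _ hrel.symm i
    exact absurd (ih _ (totalDegree_pderiv_lt hP0 i) _ hker rfl) hi

end DerivationCriterion

section ArithmeticFunctions

open ArithmeticFunction

/-- The `p`-adic valuation as an `R`-valued arithmetic function. -/
def padicValArith (R : Type*) [Semiring R] (p : ℕ) : ArithmeticFunction R :=
  ⟨fun n => padicValNat p n, by simp⟩

theorem padicValArith_apply (R : Type*) [Semiring R] (p n : ℕ) :
    padicValArith R p n = padicValNat p n := rfl

variable {R : Type*} [CommSemiring R]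

theorem arithmeticFunction_sum_apply {ι : Type*} (s : Finset ι) (f : ι → ArithmeticFunction R)
    (n : ℕ) : (∑ i ∈ s, f i) n = ∑ i ∈ s, f i n :=
  map_sum (⟨⟨fun g => g n, rfl⟩, fun _ _ => rfl⟩ : ArithmeticFunction R →+ R) f s

theorem padicValArith_pmul_mul (p : ℕ) [Fact p.Prime] (f g : ArithmeticFunction R) :
    (padicValArith R p).pmul (f * g) =
      f * (padicValArith R p).pmul g + g * (padicValArith R p).pmul f := by
  ext n
  rw [mul_comm g, pmul_apply, ArithmeticFunction.add_apply, mul_apply, mul_apply, mul_apply,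
    ← Finset.sum_add_distrib, Finset.mul_sum]
  refine Finset.sum_congr rfl fun x hx => ?_
  obtain ⟨hx1, hx2⟩ := Nat.ne_zero_of_mem_divisorsAntidiagonal hx
  rw [← (Nat.mem_divisorsAntidiagonal.mp hx).1, pmul_apply, pmul_apply, padicValArith_apply,
    padicValArith_apply, padicValArith_apply, padicValNat.mul hx1 hx2]
  push_cast
  ring

/-- Pointwise multiplication by the `p`-adic valuation is a derivation of the ring of arithmetic
functions under Dirichlet convolution; this packages the derivations for all primes `p` into a
single one. -/
def padicValDerivation (R : Type*) [CommRing R] :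
    Derivation R (ArithmeticFunction R) (Nat.Primes → ArithmeticFunction R) :=
  Derivation.mk'
    { toFun := fun f p => (padicValArith R p).pmul f
      map_add' := fun f g => by ext p n; simp [mul_add]
      map_smul' := fun c f => by ext p n; simp [mul_left_comm] }
    fun f g => funext fun p => haveI := Fact.mk p.2; padicValArith_pmul_mul p f g

theorem mul_padicValArith_pmul_apply {p N : ℕ} (hp : p.Prime) (hN : N ≠ 0)
    {f : ArithmeticFunction R} (hf : ∀ d < N, f d = 0) (g : ArithmeticFunction R) :
    (f * (padicValArith R p).pmul g) (N * p) = f N * g p := by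
  have := Fact.mk hp
  rw [mul_apply, Finset.sum_eq_single (N, p)]
  · simp [padicValArith_apply]
  · rintro ⟨d, e⟩ hde hne
    rw [Nat.mem_divisorsAntidiagonal] at hde
    by_cases hpe : p ∣ e
    · obtain ⟨e, rfl⟩ := hpe
      have hde' : d * e = N := Nat.eq_of_mul_eq_mul_right hp.pos (by linarith [hde.1])
      have hdN : d ≠ N := by
        rintro rfl
        have he : e = 1 := by simpa [hN] using hde'
        exact hne (by rw [he, mul_one])
      have hdlt : d < N :=
        lt_of_le_of_ne (Nat.le_of_dvd (Nat.pos_of_ne_zero hN) ⟨e, hde'.symm⟩) hdN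
      simp [hf d hdlt]
    · simp [padicValArith_apply, padicValNat.eq_zero_of_not_dvd hpe]
  · exact fun h => absurd (Nat.mem_divisorsAntidiagonal.mpr
      ⟨rfl, mul_ne_zero hN hp.ne_zero⟩) h

/-- The coefficients `(-log n) ^ i` of the Dirichlet series of the `i`-th derivative of `ζ`. -/
noncomputable def zetaDerivCoeff (i : ℕ) : ArithmeticFunction ℂ :=
  ⟨fun n => if n = 0 then 0 else (-Complex.log n) ^ i, if_pos rfl⟩

theorem zetaDerivCoeff_apply (i : ℕ) {n : ℕ} (hn : n ≠ 0) :
    zetaDerivCoeff i n = (-Complex.log n) ^ i := if_neg hn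

theorem infinite_neg_log_primes : {x | ∃ p : ℕ, p.Prime ∧ -Complex.log p = x}.Infinite := by
  refine Nat.infinite_setOfPred_prime.image (f := fun p : ℕ => -Complex.log p) ?_
  intro p hp q hq hpq
  simp only [neg_inj, Complex.natCast_log.symm, Complex.ofReal_inj] at hpq
  exact_mod_cast Real.log_injOn_pos (Nat.cast_pos.mpr (Nat.Prime.pos hp) : (0 : ℝ) < p)
    (Nat.cast_pos.mpr (Nat.Prime.pos hq) : (0 : ℝ) < q) hpq

theorem eq_zero_of_sum_mul_pow_eq_zero {K : Type*} [CommRing K] [IsDomain K] {S : Set K}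
    (hS : S.Infinite) (s : Finset ℕ) (c : ℕ → K) (h : ∀ x ∈ S, ∑ i ∈ s, c i * x ^ i = 0) :
    ∀ i ∈ s, c i = 0 := by
  have hpoly : ∑ i ∈ s, Polynomial.monomial i (c i) = 0 :=
    Polynomial.eq_zero_of_infinite_isRoot _ <| hS.mono fun x hx => by
      simpa [Polynomial.eval_finsetSum] using h x hx
  intro i hi
  simpa [Polynomial.finsetSum_coeff, Polynomial.coeff_monomial, hi] using
    congrArg (fun P => Polynomial.coeff P i) hpoly

theorem linearIndependent_padicValDerivation_zetaDerivCoeff :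
    LinearIndependent (ArithmeticFunction ℂ)
      fun i => padicValDerivation ℂ (zetaDerivCoeff i) := by
  refine linearIndependent_iff'.mpr fun s g hg => ?_
  suffices hvanish : ∀ N, ∀ i ∈ s, g i N = 0 from fun i hi => ext fun N => hvanish N i hi
  intro N
  induction N using Nat.strong_induction_on with
  | _ N ih =>
  rcases eq_or_ne N 0 with rfl | hN
  · simp
  refine eq_zero_of_sum_mul_pow_eq_zero infinite_neg_log_primes s (fun i => g i N) ?_
  rintro _ ⟨p, hp, rfl⟩
  have hrel : ∑ i ∈ s, g i * (padicValArith ℂ p).pmul (zetaDerivCoeff i) = 0 :=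
    (Finset.sum_apply _ _ _).symm.trans (congrFun hg ⟨p, hp⟩)
  rw [← (ArithmeticFunction.zero_apply : (0 : ArithmeticFunction ℂ) (N * p) = 0), ← hrel,
    arithmeticFunction_sum_apply]
  refine Finset.sum_congr rfl fun i hi => ?_
  rw [← zetaDerivCoeff_apply i hp.ne_zero]
  exact (mul_padicValArith_pmul_apply hp hN (fun d hd => ih d hd i hi) _).symm

theorem algebraicIndependent_zetaDerivCoeff : AlgebraicIndependent ℂ zetaDerivCoeff :=
  have : FaithfulSMul ℂ (ArithmeticFunction ℂ) :=
    ⟨fun h => by simpa using congrArg (fun f : ArithmeticFunction ℂ => f 1) (h 1)⟩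
  algebraicIndependent_of_linearIndependent_derivation _
    linearIndependent_padicValDerivation_zetaDerivCoeff

end ArithmeticFunctions

section DirichletSeries

open Asymptotics Filter Topology

theorem lseriesHasSum_aeval {σ : Type*} {F : σ → ArithmeticFunction ℂ} {s : ℂ} {a : σ → ℂ}
    (hF : ∀ i, LSeriesHasSum (F i) s (a i)) (P : MvPolynomial σ ℂ) :
    LSeriesHasSum (aeval F P) s (eval a P) := by
  induction P using MvPolynomial.induction_on with
  | C b =>
    have hconst : ⇑(aeval F (C b)) = b • LSeries.delta := by
      ext n
      rw [algHom_C, Algebra.algebraMap_eq_smul_one, ArithmeticFunction.smul_map,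
        ArithmeticFunction.one_apply]
      rfl
    have hdelta : LSeriesSummable LSeries.delta s :=
      summable_of_ne_finset_zero (s := {1}) fun n hn => by
        simp [LSeries.term_delta, Finset.notMem_singleton.mp hn]
    rw [hconst, LSeriesHasSum_iff, LSeries_smul, LSeries_delta]
    exact ⟨hdelta.smul b, by simp⟩
  | add P Q hP hQ =>
    have hadd : ⇑(aeval F (P + Q)) = aeval F P + aeval F Q := by ext n; simp
    rw [hadd, map_add]
    exact hP.add hQ
  | mul_X P i hP =>
    rw [map_mul, aeval_X, map_mul, eval_X]
    exact ArithmeticFunction.LSeriesHasSum_mul hP (hF i)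

theorem logMul_iterate_one_apply (i n : ℕ) : LSeries.logMul^[i] 1 n = Complex.log n ^ i := by
  induction i with
  | zero => simp
  | succ i ih => rw [Function.iterate_succ_apply', LSeries.logMul, ih, pow_succ']

theorem lseriesHasSum_zetaDerivCoeff (i : ℕ) {s : ℂ} (hs : 1 < s.re) :
    LSeriesHasSum (zetaDerivCoeff i) s (iteratedDeriv i riemannZeta s) := by
  have hcoeff {n : ℕ} (hn : n ≠ 0) :
      zetaDerivCoeff i n = ((-1 : ℂ) ^ i • LSeries.logMul^[i] 1) n := by
    rw [zetaDerivCoeff_apply i hn, neg_pow, Pi.smul_apply, logMul_iterate_one_apply, smul_eq_mul]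
  have habs : LSeries.abscissaOfAbsConv 1 < s.re := by
    rw [LSeries.abscissaOfAbsConv_one]; exact_mod_cast hs
  have hzeta : LSeries 1 =ᶠ[𝓝 s] riemannZeta := by
    filter_upwards [(isOpen_lt continuous_const Complex.continuous_re).mem_nhds hs] with z hz
    exact LSeries_one_eq_riemannZeta hz
  have hsum : LSeriesSummable (LSeries.logMul^[i] 1) s :=
    LSeriesSummable_of_abscissaOfAbsConv_lt_re (by rwa [LSeries.absicssaOfAbsConv_logPowMul])
  rw [LSeriesHasSum_congr s _ hcoeff, ← hzeta.iteratedDeriv_eq, LSeries_iteratedDeriv i habs]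
  exact hsum.LSeriesHasSum.smul _

theorem lseries_isEquivalent {f : ℕ → ℂ} (hf : LSeries.abscissaOfAbsConv f < ⊤) {N : ℕ}
    (hN : N ≠ 0) (hlt : ∀ n < N, f n = 0) (hfN : f N ≠ 0) :
    (fun k : ℕ => LSeries f (k + 1)) ~[atTop] fun k => f N * ((N : ℂ) ^ (k + 1))⁻¹ := by
  obtain ⟨M, rfl⟩ := Nat.exists_eq_succ_of_ne_zero hN
  have hlead := (LSeries.tendsto_cpow_mul_atTop (fun n hn => hlt n (Nat.lt_succ_of_le hn)) hf).comp
    (tendsto_atTop_add_const_right atTop (1 : ℝ) tendsto_natCast_atTop_atTop)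
  refine (((isEquivalent_const_iff_tendsto hfN).mpr hlead).mul
    (IsEquivalent.refl (u := fun k : ℕ => (((M.succ : ℕ) : ℂ) ^ (k + 1))⁻¹))).congr_left ?_
  refine Eventually.of_forall fun k => ?_
  have hpow : (M.succ : ℂ) ^ (k + 1) ≠ 0 := pow_ne_zero _ (Nat.cast_ne_zero.mpr M.succ_ne_zero)
  have hcpow : ((M : ℂ) + 1) ^ (((k : ℝ) + 1 : ℝ) : ℂ) = (M.succ : ℂ) ^ (k + 1) := by
    rw [← Complex.cpow_natCast]; push_cast; rfl
  simp only [Pi.mul_apply, Function.comp_apply, hcpow]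
  push_cast at hpow ⊢
  field_simp

theorem exists_eval_iteratedDeriv_riemannZeta_isEquivalent {m : ℕ}
    {P : MvPolynomial (Fin m) ℂ} (hP : P ≠ 0) :
    ∃ N : ℕ, N ≠ 0 ∧ ∃ c : ℂ, c ≠ 0 ∧
      (fun k : ℕ => eval (fun i : Fin m => iteratedDeriv i riemannZeta (k + 1)) P) ~[atTop]
        fun k => c * ((N : ℂ) ^ (k + 1))⁻¹ := by
  classical
  set f : ArithmeticFunction ℂ := aeval (fun i : Fin m => zetaDerivCoeff i) P
  have hf0 : f ≠ 0 := fun h => hP <| algebraicIndependent_iff.mp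
    (algebraicIndependent_zetaDerivCoeff.comp _ Fin.val_injective) P h
  have hseries {s : ℂ} (hs : 1 < s.re) :
      LSeriesHasSum f s (eval (fun i : Fin m => iteratedDeriv i riemannZeta s) P) :=
    lseriesHasSum_aeval (fun i : Fin m => lseriesHasSum_zetaDerivCoeff i hs) P
  have hexists : ∃ N, f N ≠ 0 := by
    by_contra! h
    exact hf0 (ArithmeticFunction.ext h)
  have hN0 : Nat.find hexists ≠ 0 := fun h => by simpa [h] using Nat.find_spec hexists
  have habs : LSeries.abscissaOfAbsConv f < ⊤ :=
    (hseries (s := 2) (by simp)).LSeriesSummable.abscissaOfAbsConv_le.trans_lt (EReal.coe_lt_top _)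
  refine ⟨Nat.find hexists, hN0, f (Nat.find hexists), Nat.find_spec hexists,
    (lseries_isEquivalent habs hN0 (fun n hn => not_not.mp (Nat.find_min hexists hn))
      (Nat.find_spec hexists)).congr_left ?_⟩
  filter_upwards [eventually_ge_atTop 1] with k hk
  refine (hseries ?_).LSeries_eq
  simpa using Nat.pos_of_ne_zero (Nat.one_le_iff_ne_zero.mp hk)

end DirichletSeries

section FirstOrderExpansion

open Asymptotics Filter Topology

variable {α 𝕜 : Type*} [NormedField 𝕜] {l : Filter α} {ε f g : α → 𝕜} {a b : 𝕜}

/-- `f = 1 + a ε + o(ε)` along `l`. -/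
def HasFirstOrderExpansion (l : Filter α) (ε f : α → 𝕜) (a : 𝕜) : Prop :=
  (fun x => f x - 1 - a * ε x) =o[l] ε

namespace HasFirstOrderExpansion

theorem one (l : Filter α) (ε : α → 𝕜) : HasFirstOrderExpansion l ε 1 0 := by
  simp [HasFirstOrderExpansion]

theorem congr (hf : HasFirstOrderExpansion l ε f a) (hfg : f =ᶠ[l] g) :
    HasFirstOrderExpansion l ε g a :=
  hf.congr' (hfg.mono fun x hx => by simp only [hx]) .rfl

theorem tendsto_one (hf : HasFirstOrderExpansion l ε f a) (hε : Tendsto ε l (𝓝 0)) :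
    Tendsto f l (𝓝 1) := by
  have hrem : Tendsto (fun x => f x - 1 - a * ε x) l (𝓝 0) := hf.trans_tendsto hε
  simpa using (hrem.add (hε.const_mul a)).add_const 1

theorem mul (hf : HasFirstOrderExpansion l ε f a) (hg : HasFirstOrderExpansion l ε g b)
    (hε : Tendsto ε l (𝓝 0)) : HasFirstOrderExpansion l ε (f * g) (a + b) := by
  have hg1 : Tendsto g l (𝓝 1) := hg.tendsto_one hε
  have hg0 : (fun x => g x - 1) =o[l] fun _ => (1 : 𝕜) := by
    rw [isLittleO_one_iff]; simpa using hg1.sub_const 1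
  have hfg : (fun x => (f x - 1 - a * ε x) * g x) =o[l] ε := by
    simpa using hf.mul_isBigO (hg1.isBigO_one 𝕜)
  have hεg : (fun x => a * ε x * (g x - 1)) =o[l] ε := by
    simpa using ((isBigO_refl ε l).const_mul_left a).mul_isLittleO hg0
  refine ((hfg.add hg).add hεg).congr_left fun x => ?_
  simp only [Pi.mul_apply]
  ring

theorem pow (hf : HasFirstOrderExpansion l ε f a) (hε : Tendsto ε l (𝓝 0)) (n : ℕ) :
    HasFirstOrderExpansion l ε (f ^ n) (n * a) := by
  induction n with
  | zero => simpa using one l ε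
  | succ n ih => simpa only [pow_succ, Nat.cast_add_one, add_one_mul] using ih.mul hf hε

theorem add_linear (hf : HasFirstOrderExpansion l ε f a)
    (hg : (fun x => g x - b * ε x) =o[l] ε) : HasFirstOrderExpansion l ε (f + g) (a + b) :=
  (hf.add hg).congr_left fun x => by simp only [Pi.add_apply]; ring

theorem sub_isEquivalent (hf : HasFirstOrderExpansion l ε f a)
    (hg : HasFirstOrderExpansion l ε g b) (hab : a ≠ b) :
    (f - g) ~[l] fun x => (a - b) * ε x := by
  have hrem : (fun x => (f x - g x) - (a - b) * ε x) =o[l] ε :=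
    (hf.sub hg).congr_left fun x => by ring
  exact hrem.const_mul_right (sub_ne_zero.mpr hab)

end HasFirstOrderExpansion

section LeibnizRecursion

variable {ψ g : ℕ → α → 𝕜}

theorem tendsto_div_sq_zero (hψ0 : Tendsto (ψ 0) l (Bornology.cobounded 𝕜))
    (hψ1 : Tendsto (ψ 1) l (𝓝 0)) : Tendsto (fun x => ψ 1 x / ψ 0 x ^ 2) l (𝓝 0) := by
  simpa [div_eq_mul_inv] using hψ1.mul ((tendsto_inv₀_cobounded.comp hψ0).pow 2)

theorem isLittleO_div_pow_succ (hψ0 : Tendsto (ψ 0) l (Bornology.cobounded 𝕜)) {i : ℕ}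
    (hi : 2 ≤ i) (hψ : ψ i =o[l] ψ 1) :
    (fun x => ψ i x / ψ 0 x ^ (i + 1)) =o[l] fun x => ψ 1 x / ψ 0 x ^ 2 := by
  obtain ⟨j, rfl⟩ := Nat.exists_eq_add_of_le hi
  have hinv : (fun x => (ψ 0 x)⁻¹ ^ (j + 1)) =O[l] fun _ => (1 : 𝕜) :=
    ((tendsto_inv₀_cobounded.comp hψ0).pow (j + 1)).isBigO_one 𝕜
  refine ((hψ.mul_isBigO hinv).mul_isBigO (isBigO_refl (fun x => (ψ 0 x)⁻¹ ^ 2) l)).congr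
    (fun x => ?_) fun x => ?_
  · rw [div_eq_mul_inv, ← inv_pow]; ring
  · rw [div_eq_mul_inv, ← inv_pow]; ring

theorem leibniz_recursion_div_pow {K : Type*} [Field K] {ψ g : ℕ → K} (hψ : ψ 0 ≠ 0) {r : ℕ}
    (hg : g (r + 1) = ∑ i ∈ Finset.range (r + 1), r.choose i * ψ i * g (r - i)) :
    g (r + 1) / ψ 0 ^ (r + 1) = g r / ψ 0 ^ r + ∑ i ∈ Finset.range r,
      r.choose (i + 1) * (ψ (i + 1) / ψ 0 ^ (i + 2)) *
        (g (r - (i + 1)) / ψ 0 ^ (r - (i + 1))) := by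
  rw [hg, Finset.sum_range_succ', add_div, Finset.sum_div, add_comm]
  congr 1
  · rw [Nat.choose_zero_right, Nat.cast_one, Nat.sub_zero, pow_succ']
    field_simp
  · refine Finset.sum_congr rfl fun i hi => ?_
    have hexp : r + 1 = (i + 2) + (r - (i + 1)) := by have := Finset.mem_range.mp hi; omega
    rw [hexp, pow_add]
    field_simp

/-- In the recursion only the terms `i = 0` and `i = 1` contribute to first order, and
`r.choose 2 + r = (r + 1).choose 2`. -/
theorem hasFirstOrderExpansion_of_leibniz_recursion
    (hψ0 : Tendsto (ψ 0) l (Bornology.cobounded 𝕜)) (hψ1 : Tendsto (ψ 1) l (𝓝 0))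
    (hψ : ∀ i, 2 ≤ i → ψ i =o[l] ψ 1) (hg0 : g 0 =ᶠ[l] 1)
    (hg : ∀ r, g (r + 1) =ᶠ[l]
      fun x => ∑ i ∈ Finset.range (r + 1), r.choose i * ψ i x * g (r - i) x) (r : ℕ) :
    HasFirstOrderExpansion l (fun x => ψ 1 x / ψ 0 x ^ 2) (fun x => g r x / ψ 0 x ^ r)
      (r.choose 2) := by
  set ε : α → 𝕜 := fun x => ψ 1 x / ψ 0 x ^ 2
  have hε : Tendsto ε l (𝓝 0) := tendsto_div_sq_zero hψ0 hψ1
  induction r using Nat.strong_induction_on with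
  | _ r ih =>
  rcases r with _ | r
  · simpa using (HasFirstOrderExpansion.one l ε).congr
      (hg0.symm.mono fun x hx => by simpa using hx)
  set T : ℕ → α → 𝕜 := fun i x => r.choose (i + 1) * (ψ (i + 1) x / ψ 0 x ^ (i + 2)) *
    (g (r - (i + 1)) x / ψ 0 x ^ (r - (i + 1)))
  have hT (i : ℕ) (hi : i ∈ Finset.range r) :
      (fun x => T i x - if i = 0 then r * ε x else 0) =o[l] ε := by
    have hG := (ih (r - (i + 1)) (by omega)).tendsto_one hε
    split_ifs with h
    · subst h
      refine (((isBigO_refl ε l).const_mul_left (r : 𝕜)).mul_isLittleO <|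
        (isLittleO_one_iff 𝕜).mpr (by simpa only [sub_self] using hG.sub_const 1)).congr
          (fun x => ?_) fun x => mul_one _
      simp only [T, ε, zero_add, Nat.choose_one_right]
      ring
    · have hψi := isLittleO_div_pow_succ hψ0 (by omega) (hψ (i + 1) (by omega))
      simpa [T] using
        (hψi.const_mul_left (r.choose (i + 1) : 𝕜)).mul_isBigO (hG.isBigO_one 𝕜)
  have hsum : (fun x => ∑ i ∈ Finset.range r, T i x - r * ε x) =o[l] ε := by
    refine (IsLittleO.fun_sum hT).congr_left fun x => ?_
    rw [Finset.sum_sub_distrib, Finset.sum_ite_eq']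
    rcases r.eq_zero_or_pos with rfl | hr <;> simp [*]
  rw [Nat.choose_succ_succ' r 1, Nat.choose_one_right, Nat.add_comm r (r.choose 2), Nat.cast_add]
  refine ((ih r r.lt_succ_self).add_linear hsum).congr ?_
  filter_upwards [hg r, hψ0.eventually_ne_cobounded 0] with x hx hx0
  exact (leibniz_recursion_div_pow (ψ := fun i => ψ i x) (g := fun i => g i x) hx0 hx).symm

end LeibnizRecursion

end FirstOrderExpansion

section Digamma

open Asymptotics Filter Topology Complex

open scoped Nat

local notation "γ" => Real.eulerMascheroniConstant

theorem ne_neg_natCast_of_re_pos {z : ℂ} (hz : 0 < z.re) (m : ℕ) : z ≠ -m := by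
  rintro rfl
  simp only [neg_re, natCast_re, Left.neg_pos_iff] at hz
  exact absurd hz (Nat.cast_nonneg m).not_gt

theorem isOpen_re_pos : IsOpen {z : ℂ | 0 < z.re} := isOpen_lt continuous_const continuous_re

theorem differentiableOn_digamma : DifferentiableOn ℂ digamma {z | 0 < z.re} := by
  have hGamma : DifferentiableOn ℂ Gamma {z | 0 < z.re} := fun z hz =>
    (differentiableAt_Gamma z (ne_neg_natCast_of_re_pos hz)).differentiableWithinAt
  exact (hGamma.deriv isOpen_re_pos).div hGamma fun z hz =>
    Gamma_ne_zero (ne_neg_natCast_of_re_pos hz)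

theorem digamma_add_natCast {z : ℂ} (hz : 0 < z.re) (N : ℕ) :
    digamma (z + N) = digamma z + ∑ k ∈ Finset.range N, (z + k)⁻¹ := by
  induction N with
  | zero => simp
  | succ N ih =>
    have hzN : 0 < (z + N).re := by
      rw [add_re, natCast_re]; exact add_pos_of_pos_of_nonneg hz N.cast_nonneg
    rw [Nat.cast_add_one, ← add_assoc, digamma_apply_add_one _ (ne_neg_natCast_of_re_pos hzN), ih,
      Finset.sum_range_succ, add_assoc]

theorem digamma_natCast_add_one (k : ℕ) :
    digamma (k + 1) = (-γ + harmonic k : ℝ) := by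
  rw [digamma_def, logDeriv_apply, deriv_Gamma_nat, Gamma_nat_eq_factorial,
    mul_div_cancel_left₀ _ (Nat.cast_ne_zero.mpr k.factorial_ne_zero)]
  push_cast
  rfl

theorem digamma_ofReal {x : ℝ} (hx : 0 < x) : digamma x = logDeriv Real.Gamma x := by
  have hderiv : deriv Gamma x = (deriv Real.Gamma x : ℝ) := by
    have hC := (differentiableAt_Gamma x (ne_neg_natCast_of_re_pos hx)).hasDerivAt.comp_ofReal
    have hR := (Real.differentiableOn_Gamma_Ioi.differentiableAt (Ioi_mem_nhds hx)).hasDerivAt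
    exact hC.unique (hR.ofReal_comp.congr_of_eventuallyEq
      (Eventually.of_forall fun y => Gamma_ofReal y))
  rw [digamma_def, logDeriv_apply, logDeriv_apply, hderiv, Gamma_ofReal, ofReal_div]

theorem log_Gamma_add_one_sub {x : ℝ} (hx : 0 < x) :
    Real.log (Real.Gamma (x + 1)) - Real.log (Real.Gamma x) = Real.log x := by
  rw [Real.Gamma_add_one hx.ne', Real.log_mul hx.ne' (Real.Gamma_pos_of_pos hx).ne',
    add_sub_cancel_right]

/-- Log-convexity of `Γ` confines its logarithmic derivative between the slopes of `log ∘ Γ` over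
`[x, x + 1]` and `[x + 1, x + 2]`. -/
theorem logDeriv_Gamma_add_one_mem_Icc {x : ℝ} (hx : 0 < x) :
    logDeriv Real.Gamma (x + 1) ∈ Set.Icc (Real.log x) (Real.log (x + 1)) := by
  have hx1 : 0 < x + 1 := by positivity
  have hdiff := Real.differentiableOn_Gamma_Ioi.differentiableAt (Ioi_mem_nhds hx1)
  have hlog := hdiff.log (Real.Gamma_pos_of_pos hx1).ne'
  rw [← Real.deriv_log_comp_eq_logDeriv hdiff (Real.Gamma_pos_of_pos hx1).ne']
  constructor
  · refine Eq.trans_le ?_ (Real.convexOn_log_Gamma.slope_le_deriv hx hx1 (lt_add_one x) hlog)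
    simp [slope_def_field, log_Gamma_add_one_sub hx]
  · refine (Real.convexOn_log_Gamma.deriv_le_slope hx1 (y := x + 1 + 1) ?_ (lt_add_one _)
      hlog).trans_eq ?_
    · exact add_pos hx1 one_pos
    · simp [slope_def_field, log_Gamma_add_one_sub hx1]

theorem tendsto_logDeriv_Gamma_sub_log :
    Tendsto (fun x => logDeriv Real.Gamma x - Real.log x) atTop (𝓝 0) := by
  have hlower := Real.tendsto_log_comp_add_sub_log (-1)
  refine tendsto_of_tendsto_of_tendsto_of_le_of_le' hlower tendsto_const_nhds ?_ ?_
  all_goals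
    filter_upwards [eventually_gt_atTop 1] with x hx
    have hmem := logDeriv_Gamma_add_one_mem_Icc (sub_pos.mpr hx)
    rw [sub_add_cancel] at hmem
  · exact sub_le_sub_right hmem.1 _
  · exact sub_nonpos.mpr hmem.2

theorem tendsto_logDeriv_Gamma_add_natCast_sub_log (x : ℝ) :
    Tendsto (fun N : ℕ => logDeriv Real.Gamma (x + N) - Real.log N) atTop (𝓝 0) := by
  have hx := tendsto_atTop_add_const_left atTop x tendsto_natCast_atTop_atTop
  have hlog := (Real.tendsto_log_comp_add_sub_log x).comp tendsto_natCast_atTop_atTop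
  simpa [Function.comp_def, add_comm x] using (tendsto_logDeriv_Gamma_sub_log.comp hx).add hlog

theorem tendsto_sum_range_digamma {x : ℝ} (hx : 0 < x) :
    Tendsto (fun N => ∑ k ∈ Finset.range N, ((k + 1 : ℂ)⁻¹ - ((x : ℂ) + k)⁻¹)) atTop
      (𝓝 (digamma x + γ)) := by
  have hreal := (Real.tendsto_harmonic_sub_log.sub
    (tendsto_logDeriv_Gamma_add_natCast_sub_log x)).const_add (logDeriv Real.Gamma x)
  rw [sub_zero] at hreal
  rw [digamma_ofReal hx, ← ofReal_add]
  refine (Filter.Tendsto.ofReal hreal).congr fun N => ?_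
  have hrec := digamma_add_natCast (z := x) hx N
  rw [← ofReal_natCast, ← ofReal_add, digamma_ofReal (by positivity), digamma_ofReal hx] at hrec
  rw [Finset.sum_sub_distrib, ← sub_eq_of_eq_add' hrec, harmonic]
  push_cast
  ring

theorem norm_inv_sub_inv_le {z : ℂ} {δ : ℝ} (hδ : 0 < δ) (hδ1 : δ ≤ 1) (hz : δ ≤ z.re) (k : ℕ) :
    ‖(k + 1 : ℂ)⁻¹ - (z + k)⁻¹‖ ≤ ‖z - 1‖ / δ * ((k + 1 : ℝ) ^ 2)⁻¹ := by
  have hlower : δ * (k + 1) ≤ ‖z + k‖ := calc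
    δ * (k + 1) ≤ z.re + k := by
      rw [mul_add_one, add_comm]
      exact add_le_add hz (mul_le_of_le_one_left k.cast_nonneg hδ1)
    _ = (z + k).re := by rw [add_re, natCast_re]
    _ ≤ ‖z + k‖ := re_le_norm _
  have hk : (0 : ℝ) < k + 1 := by positivity
  have hzk : z + k ≠ 0 := norm_pos_iff.mp ((mul_pos hδ hk).trans_le hlower)
  have hk0 : (k + 1 : ℂ) ≠ 0 := Nat.cast_add_one_ne_zero k
  rw [inv_sub_inv hk0 hzk, norm_div, norm_mul,
    show z + k - (k + 1 : ℂ) = z - 1 by ring,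
    show ‖(k + 1 : ℂ)‖ = k + 1 by exact_mod_cast norm_natCast (k + 1)]
  calc ‖z - 1‖ / ((k + 1) * ‖z + k‖) ≤ ‖z - 1‖ / ((k + 1) * (δ * (k + 1))) := by gcongr
    _ = ‖z - 1‖ / δ * ((k + 1 : ℝ) ^ 2)⁻¹ := by field_simp

theorem exists_summable_norm_inv_sub_inv_le {z : ℂ} (hz : 0 < z.re) :
    ∃ U, IsOpen U ∧ z ∈ U ∧ U ⊆ {w : ℂ | 0 < w.re} ∧ ∃ u : ℕ → ℝ, Summable u ∧
      ∀ k : ℕ, ∀ w ∈ U, ‖(k + 1 : ℂ)⁻¹ - (w + k)⁻¹‖ ≤ u k := by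
  obtain ⟨δ, hδ, hδz⟩ := exists_between (lt_min one_pos hz)
  obtain ⟨hδ1, hδre⟩ := lt_min_iff.mp hδz
  have hsum : Summable fun k : ℕ => ((k + 1 : ℝ) ^ 2)⁻¹ := mod_cast
    (summable_nat_add_iff 1).mpr (Real.summable_nat_pow_inv.mpr one_lt_two)
  refine ⟨{w | δ < w.re} ∩ Metric.ball 1 (‖z - 1‖ + 1),
    (isOpen_lt continuous_const continuous_re).inter Metric.isOpen_ball,
    ⟨hδre, by simp [dist_eq_norm]⟩, fun w hw => hδ.trans hw.1, _,
    hsum.mul_left ((‖z - 1‖ + 1) / δ), fun k w hw => ?_⟩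
  refine (norm_inv_sub_inv_le hδ hδ1.le hw.1.le k).trans ?_
  have hnorm : ‖w - 1‖ ≤ ‖z - 1‖ + 1 := (mem_ball_iff_norm.mp hw.2).le
  gcongr

theorem hasDerivAt_inv_sub_inv {z : ℂ} (hz : 0 < z.re) (k : ℕ) :
    HasDerivAt (fun w : ℂ => (k + 1 : ℂ)⁻¹ - (w + k)⁻¹) ((z + k) ^ 2)⁻¹ z := by
  have hzk : z + k ≠ 0 := fun h => ne_neg_natCast_of_re_pos hz k (eq_neg_of_add_eq_zero_left h)
  simpa [neg_div, one_div] using (((hasDerivAt_id z).add_const (k : ℂ)).inv hzk).const_sub _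

theorem differentiableOn_tsum_inv_sub_inv :
    DifferentiableOn ℂ (fun w : ℂ => ∑' k : ℕ, ((k + 1 : ℂ)⁻¹ - (w + k)⁻¹)) {z | 0 < z.re} := by
  intro z hz
  obtain ⟨U, hU, hzU, hUre, u, hu, hbound⟩ := exists_summable_norm_inv_sub_inv_le hz
  refine ((differentiableOn_tsum_of_summable_norm hu (fun k w hw => ?_) hU
    hbound).differentiableAt (hU.mem_nhds hzU)).differentiableWithinAt
  exact (hasDerivAt_inv_sub_inv (hUre hw) k).differentiableAt.differentiableWithinAt

theorem hasSum_deriv_tsum_inv_sub_inv {z : ℂ} (hz : 0 < z.re) :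
    HasSum (fun k : ℕ => ((z + k) ^ 2)⁻¹)
      (deriv (fun w : ℂ => ∑' k : ℕ, ((k + 1 : ℂ)⁻¹ - (w + k)⁻¹)) z) := by
  obtain ⟨U, hU, hzU, hUre, u, hu, hbound⟩ := exists_summable_norm_inv_sub_inv_le hz
  have hderiv := hasSum_deriv_of_summable_norm hu (fun k w hw =>
    (hasDerivAt_inv_sub_inv (hUre hw) k).differentiableAt.differentiableWithinAt) hU hbound hzU
  exact hderiv.congr_fun fun k => (hasDerivAt_inv_sub_inv hz k).deriv.symm

theorem summable_inv_sub_inv {z : ℂ} (hz : 0 < z.re) :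
    Summable fun k : ℕ => (k + 1 : ℂ)⁻¹ - (z + k)⁻¹ := by
  obtain ⟨U, -, hzU, -, u, hu, hbound⟩ := exists_summable_norm_inv_sub_inv_le hz
  exact hu.of_norm_bounded fun k => hbound k z hzU

theorem digamma_eqOn_tsum :
    Set.EqOn digamma (fun z : ℂ => ∑' k : ℕ, ((k + 1 : ℂ)⁻¹ - (z + k)⁻¹) - γ) {z | 0 < z.re} := by
  have hreal {x : ℝ} (hx : 0 < x) :
      digamma x = ∑' k : ℕ, ((k + 1 : ℂ)⁻¹ - ((x : ℂ) + k)⁻¹) - γ :=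
    eq_sub_of_add_eq <| tendsto_nhds_unique (tendsto_sum_range_digamma hx)
      (summable_inv_sub_inv (z := x) (by simpa using hx)).hasSum.tendsto_sum_nat
  have hone : Tendsto ((↑) : ℝ → ℂ) (𝓝[≠] 1) (𝓝[≠] 1) := by
    simpa using continuous_ofReal.continuousWithinAt.tendsto_nhdsWithin
      (s := {(1 : ℝ)}ᶜ) (t := {(1 : ℂ)}ᶜ) (x := 1) (fun x hx => by simpa using hx)
  have hpos : ∀ᶠ x : ℝ in 𝓝[≠] 1, 0 < x := eventually_nhdsWithin_of_eventually_nhds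
    (Ioi_mem_nhds one_pos)
  have hdigamma := differentiableOn_digamma.analyticOnNhd isOpen_re_pos
  refine hdigamma.eqOn_of_preconnected_of_frequently_eq
    ((differentiableOn_tsum_inv_sub_inv.sub_const _).analyticOnNhd isOpen_re_pos)
    (convex_halfSpace_re_gt 0).isPreconnected (z₀ := 1) (by simp) ?_
  exact hone.frequently (hpos.mono fun x hx => hreal hx).frequently

theorem hasSum_digamma {z : ℂ} (hz : 0 < z.re) :
    HasSum (fun k : ℕ => (k + 1 : ℂ)⁻¹ - (z + k)⁻¹) (digamma z + γ) := by
  rw [digamma_eqOn_tsum hz, sub_add_cancel]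
  exact (summable_inv_sub_inv hz).hasSum

theorem hasSum_deriv_digamma {z : ℂ} (hz : 0 < z.re) :
    HasSum (fun k : ℕ => ((z + k) ^ 2)⁻¹) (deriv digamma z) := by
  rw [(digamma_eqOn_tsum.eventuallyEq_of_mem (isOpen_re_pos.mem_nhds hz)).deriv_eq,
    deriv_sub_const]
  exact hasSum_deriv_tsum_inv_sub_inv hz

theorem hasSum_inv_sub_inv_succ {z : ℂ} (hz : 0 < z.re) :
    HasSum (fun k : ℕ => (z + k)⁻¹ - (z + 1 + k)⁻¹) z⁻¹ := by
  have hz1 : 0 < (z + 1).re := by rw [add_re, one_re]; positivity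
  have hdiff := (hasSum_digamma hz1).sub (hasSum_digamma hz)
  rw [digamma_apply_add_one _ (ne_neg_natCast_of_re_pos hz)] at hdiff
  convert! hdiff using 1
  · ext k; ring
  · ring

theorem hasSum_inv_sub_inv_succ_real {x : ℝ} (hx : 0 < x) :
    HasSum (fun k : ℕ => (x + k)⁻¹ - (x + 1 + k)⁻¹) x⁻¹ := by
  have hcomplex := hasSum_inv_sub_inv_succ (z := x) (by simpa using hx)
  exact_mod_cast hcomplex

theorem norm_inv_add_natCast_sq_le {z : ℂ} (hz : 1 < z.re) (k : ℕ) :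
    ‖((z + k) ^ 2)⁻¹‖ ≤ (z.re - 1 + k)⁻¹ - (z.re - 1 + 1 + k)⁻¹ := by
  have hx : 0 < z.re - 1 + k := add_pos_of_pos_of_nonneg (sub_pos.mpr hz) k.cast_nonneg
  have hlower : z.re - 1 + 1 + k ≤ ‖z + k‖ := by
    simpa using re_le_norm (z + k)
  rw [inv_sub_inv hx.ne' (by linarith), norm_inv, norm_pow, sq,
    show z.re - 1 + 1 + k - (z.re - 1 + k) = 1 by ring, one_div]
  refine inv_anti₀ (mul_pos hx (by linarith)) ?_
  exact mul_le_mul (by linarith) hlower (by linarith) (norm_nonneg _)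

theorem norm_deriv_digamma_sub_inv_le {z : ℂ} (hz : 1 < z.re) :
    ‖deriv digamma z - z⁻¹‖ ≤ z.re⁻¹ * (z.re - 1)⁻¹ := by
  have hz0 : 0 < z.re := one_pos.trans hz
  have hsum := (hasSum_deriv_digamma hz0).sub (hasSum_inv_sub_inv_succ hz0)
  rw [← hsum.tsum_eq]
  refine tsum_of_norm_bounded ((hasSum_inv_sub_inv_succ_real (sub_pos.mpr hz)).mul_left _)
    fun k => ?_
  have hre : z.re ≤ ‖z + 1 + k‖ := by
    refine le_trans ?_ (re_le_norm _)
    simp [add_assoc, add_nonneg]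
  have hne {w : ℂ} (hw : 0 < w.re) : w ≠ 0 := fun h => by simp [h] at hw
  have hzk : z + k ≠ 0 := hne (by simpa using by positivity)
  have hz1k : z + 1 + k ≠ 0 := hne (by simpa using by positivity)
  calc ‖((z + k) ^ 2)⁻¹ - ((z + k)⁻¹ - (z + 1 + k)⁻¹)‖
      = ‖z + 1 + k‖⁻¹ * ‖((z + k) ^ 2)⁻¹‖ := by
        rw [← norm_inv, ← norm_mul]
        congr 1
        field_simp
        ring
    _ ≤ _ := by
      gcongr
      exact norm_inv_add_natCast_sq_le hz k

theorem norm_deriv_digamma_le {z : ℂ} (hz : 1 < z.re) : ‖deriv digamma z‖ ≤ (z.re - 1)⁻¹ := by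
  have hz0 : 0 < z.re := one_pos.trans hz
  rw [← (hasSum_deriv_digamma hz0).tsum_eq]
  exact tsum_of_norm_bounded (hasSum_inv_sub_inv_succ_real (sub_pos.mpr hz))
    (norm_inv_add_natCast_sq_le hz)

theorem norm_iteratedDeriv_digamma_le {z : ℂ} (hz : 4 ≤ z.re) (i : ℕ) :
    ‖iteratedDeriv (i + 1) digamma z‖ ≤ i ! * (z.re / 4)⁻¹ / (z.re / 2) ^ i := by
  have hre {w : ℂ} (hw : w ∈ Metric.closedBall z (z.re / 2)) : z.re / 2 ≤ w.re := by
    have hdiff := (abs_re_le_norm _).trans (mem_closedBall_iff_norm.mp hw)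
    rw [sub_re] at hdiff
    linarith [neg_le_of_abs_le hdiff]
  have hcont : DiffContOnCl ℂ (deriv digamma) (Metric.ball z (z.re / 2)) := by
    refine ((differentiableOn_digamma.deriv isOpen_re_pos).mono fun w hw => ?_).diffContOnCl
    have hw' := hre (Metric.closure_ball_subset_closedBall hw)
    exact (by linarith : 0 < w.re)
  rw [iteratedDeriv_succ']
  refine norm_iteratedDeriv_le_of_forall_mem_sphere_norm_le i (by linarith) hcont fun w hw => ?_
  have hw' := hre (Metric.sphere_subset_closedBall hw)
  refine (norm_deriv_digamma_le (by linarith)).trans (inv_anti₀ ?_ ?_) <;> linarith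

theorem deriv_digamma_natCast_add_one_isEquivalent :
    (fun k : ℕ => deriv digamma (k + 1)) ~[atTop] fun k => (k + 1 : ℂ)⁻¹ := by
  refine IsLittleO.of_bound fun c hc => ?_
  filter_upwards [(tendsto_inv_atTop_nhds_zero_nat (𝕜 := ℝ)).eventually_le_const hc,
    eventually_gt_atTop 0] with k hkc hk
  have hbound := norm_deriv_digamma_sub_inv_le (z := k + 1) (by simpa using hk)
  simp only [add_re, natCast_re, one_re, add_sub_cancel_right] at hbound
  have hnorm : ‖(k + 1 : ℂ)⁻¹‖ = (k + 1 : ℝ)⁻¹ := by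
    rw [norm_inv]; exact_mod_cast congrArg (·⁻¹) (norm_natCast (k + 1))
  rw [hnorm, mul_comm]
  exact hbound.trans (by gcongr)

theorem tendsto_inv_natCast_add_one :
    Tendsto (fun k : ℕ => (k + 1 : ℂ)⁻¹) atTop (𝓝 0) := by
  simpa [one_div] using tendsto_one_div_add_atTop_nhds_zero_nat (𝕜 := ℂ)

theorem iteratedDeriv_digamma_natCast_add_one_isLittleO {i : ℕ} (hi : 2 ≤ i) :
    (fun k : ℕ => iteratedDeriv i digamma (k + 1)) =o[atTop]
      fun k => iteratedDeriv 1 digamma (k + 1) := by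
  obtain ⟨j, rfl⟩ := Nat.exists_eq_add_of_le' hi
  rw [iteratedDeriv_one]
  refine IsLittleO.trans_isEquivalent ?_ deriv_digamma_natCast_add_one_isEquivalent.symm
  have hbound : (fun k : ℕ => iteratedDeriv (j + 2) digamma (k + 1)) =O[atTop]
      fun k => (k + 1 : ℂ)⁻¹ * ((k + 1 : ℂ)⁻¹) ^ (j + 1) := by
    refine IsBigO.of_bound ((j + 1)! * 4 * 2 ^ (j + 1)) ?_
    filter_upwards [eventually_ge_atTop 3] with k hk
    have hre : (k + 1 : ℂ).re = k + 1 := by simp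
    refine (norm_iteratedDeriv_digamma_le (z := k + 1) ?_ (j + 1)).trans_eq ?_
    · rw [hre]; exact_mod_cast Nat.succ_le_succ hk
    · have hnorm : ‖(k + 1 : ℂ)‖ = k + 1 := by exact_mod_cast norm_natCast (k + 1)
      rw [hre, norm_mul, norm_pow, norm_inv, hnorm, div_pow, inv_pow]
      field_simp
  refine hbound.trans_isLittleO ?_
  have hlim : Tendsto (fun k : ℕ => ((k + 1 : ℂ)⁻¹) ^ (j + 1)) atTop (𝓝 0) := by
    simpa using tendsto_inv_natCast_add_one.pow (j + 1)
  simpa using (isBigO_refl (fun k : ℕ => (k + 1 : ℂ)⁻¹) atTop).mul_isLittleO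
    ((isLittleO_one_iff ℂ).mpr hlim)

theorem tendsto_digamma_natCast_add_one_sub_log :
    Tendsto (fun k : ℕ => digamma (k + 1) - (Real.log (k + 1) : ℂ)) atTop (𝓝 0) := by
  have hlim := Real.tendsto_harmonic_sub_log_add_one.sub_const γ
  rw [sub_self] at hlim
  refine (Filter.Tendsto.ofReal hlim).congr fun k => ?_
  rw [digamma_natCast_add_one]
  push_cast
  ring

theorem tendsto_log_natCast_add_one :
    Tendsto (fun k : ℕ => Real.log (k + 1)) atTop atTop :=
  Real.tendsto_log_atTop.comp
    (tendsto_atTop_add_const_right _ _ tendsto_natCast_atTop_atTop)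

theorem digamma_natCast_add_one_isEquivalent :
    (fun k : ℕ => digamma (k + 1)) ~[atTop] fun k => (Real.log (k + 1) : ℂ) := by
  refine tendsto_digamma_natCast_add_one_sub_log.isBigO_one ℝ |>.trans_isLittleO ?_
  rw [isLittleO_one_left_iff]
  simpa [Function.comp_def] using tendsto_norm_atTop_atTop.comp tendsto_log_natCast_add_one

theorem tendsto_digamma_natCast_add_one_cobounded :
    Tendsto (fun k : ℕ => digamma (k + 1)) atTop (Bornology.cobounded ℂ) := by
  rw [← tendsto_norm_atTop_iff_cobounded]
  refine digamma_natCast_add_one_isEquivalent.isTheta.tendsto_norm_atTop_iff.mpr ?_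
  simpa [Function.comp_def] using tendsto_norm_atTop_atTop.comp tendsto_log_natCast_add_one

end Digamma

section GammaDerivatives

open Asymptotics Filter Topology Complex

theorem iteratedDeriv_succ_Gamma_div {z : ℂ} (hz : 0 < z.re) (r : ℕ) :
    iteratedDeriv (r + 1) Gamma z / Gamma z = ∑ i ∈ Finset.range (r + 1),
      r.choose i * iteratedDeriv i digamma z * (iteratedDeriv (r - i) Gamma z / Gamma z) := by
  have hnhds := isOpen_re_pos.mem_nhds hz
  have hGamma : AnalyticAt ℂ Gamma z := DifferentiableOn.analyticAt (fun w hw =>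
    (differentiableAt_Gamma w (ne_neg_natCast_of_re_pos hw)).differentiableWithinAt) hnhds
  have hdigamma : AnalyticAt ℂ digamma z := differentiableOn_digamma.analyticAt hnhds
  have hderiv : deriv Gamma =ᶠ[𝓝 z] digamma * Gamma := by
    filter_upwards [hnhds] with w hw
    rw [Pi.mul_apply, digamma_def, logDeriv_apply,
      div_mul_cancel₀ _ (Gamma_ne_zero (ne_neg_natCast_of_re_pos hw))]
  rw [iteratedDeriv_succ', hderiv.iteratedDeriv_eq,
    iteratedDeriv_mul hdigamma.contDiffAt hGamma.contDiffAt, Finset.sum_div]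
  exact Finset.sum_congr rfl fun i _ => mul_div_assoc _ _ _

theorem tendsto_iteratedDeriv_one_digamma_natCast_add_one :
    Tendsto (fun k : ℕ => iteratedDeriv 1 digamma (k + 1)) atTop (𝓝 0) := by
  rw [iteratedDeriv_one]
  refine deriv_digamma_natCast_add_one_isEquivalent.symm.tendsto_nhds ?_
  exact tendsto_inv_natCast_add_one

theorem hasFirstOrderExpansion_iteratedDeriv_Gamma (r : ℕ) :
    HasFirstOrderExpansion atTop
      (fun k : ℕ => iteratedDeriv 1 digamma (k + 1) / digamma (k + 1) ^ 2)
      (fun k => iteratedDeriv r Gamma (k + 1) / Gamma (k + 1) / digamma (k + 1) ^ r)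
      (r.choose 2) := by
  have hre (k : ℕ) : 0 < (k + 1 : ℂ).re := by simpa using k.cast_add_one_pos
  have hexp := hasFirstOrderExpansion_of_leibniz_recursion
    (ψ := fun i (k : ℕ) => iteratedDeriv i digamma (k + 1))
    (g := fun r (k : ℕ) => iteratedDeriv r Gamma (k + 1) / Gamma (k + 1))
    (by simpa using tendsto_digamma_natCast_add_one_cobounded)
    tendsto_iteratedDeriv_one_digamma_natCast_add_one
    (fun i hi => iteratedDeriv_digamma_natCast_add_one_isLittleO hi)
    (.of_forall fun k => by
      simp [div_self (Gamma_ne_zero (ne_neg_natCast_of_re_pos (hre k)))])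
    (fun r => .of_forall fun k => iteratedDeriv_succ_Gamma_div (hre k) r) r
  simpa only [iteratedDeriv_zero] using hexp

theorem tendsto_iteratedDeriv_digamma_div_sq :
    Tendsto (fun k : ℕ => iteratedDeriv 1 digamma (k + 1) / digamma (k + 1) ^ 2) atTop (𝓝 0) := by
  simpa only [iteratedDeriv_zero] using tendsto_div_sq_zero
    (ψ := fun i (k : ℕ) => iteratedDeriv i digamma (k + 1))
    (by simpa using tendsto_digamma_natCast_add_one_cobounded)
    tendsto_iteratedDeriv_one_digamma_natCast_add_one

theorem iteratedDeriv_Gamma_div_isEquivalent (n : ℕ) :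
    (fun k : ℕ => iteratedDeriv n Gamma (k + 1) / Gamma (k + 1)) ~[atTop]
      fun k => (Real.log (k + 1) : ℂ) ^ n := by
  refine IsEquivalent.trans ?_ (digamma_natCast_add_one_isEquivalent.pow n)
  refine isEquivalent_of_tendsto_one ?_
  exact (hasFirstOrderExpansion_iteratedDeriv_Gamma n).tendsto_one
    tendsto_iteratedDeriv_digamma_div_sq

theorem choose_two_mul_sub_ne_zero {ℓ n : ℕ} (hℓ : 2 ≤ ℓ) (hn : 1 ≤ n) :
    ((ℓ * n).choose 2 : ℂ) - ℓ * (n.choose 2 : ℂ) ≠ 0 := by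
  have hℓ0 : (ℓ : ℂ) ≠ 0 := Nat.cast_ne_zero.mpr (by omega)
  have hn0 : (n : ℂ) ≠ 0 := Nat.cast_ne_zero.mpr (by omega)
  have hℓ1 : (ℓ : ℂ) - 1 ≠ 0 := sub_ne_zero.mpr (by exact_mod_cast (by omega : ℓ ≠ 1))
  have hvalue : ((ℓ * n).choose 2 : ℂ) - ℓ * (n.choose 2 : ℂ) = ℓ * n ^ 2 * (ℓ - 1) / 2 := by
    rw [Nat.cast_choose_two, Nat.cast_choose_two]
    push_cast
    ring
  rw [hvalue]
  exact div_ne_zero (mul_ne_zero (mul_ne_zero hℓ0 (pow_ne_zero 2 hn0)) hℓ1) two_ne_zero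

/-- The leading terms `ψ ^ (ℓ n)` of the two sides cancel, and the first-order terms do not. -/
theorem iteratedDeriv_Gamma_div_sub_pow_isEquivalent {ℓ n : ℕ} (hℓ : 2 ≤ ℓ) (hn : 1 ≤ n) :
    (fun k : ℕ => iteratedDeriv (ℓ * n) Gamma (k + 1) / Gamma (k + 1) -
        (iteratedDeriv n Gamma (k + 1) / Gamma (k + 1)) ^ ℓ) ~[atTop]
      fun k => ((ℓ * n).choose 2 - ℓ * n.choose 2 : ℂ) *
        ((Real.log (k + 1) : ℂ) ^ (ℓ * n - 2) * (k + 1 : ℂ)⁻¹) := by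
  have hdiff := (hasFirstOrderExpansion_iteratedDeriv_Gamma (ℓ * n)).sub_isEquivalent
    ((hasFirstOrderExpansion_iteratedDeriv_Gamma n).pow tendsto_iteratedDeriv_digamma_div_sq ℓ)
    (sub_ne_zero.mp (choose_two_mul_sub_ne_zero hℓ hn))
  have hderiv := deriv_digamma_natCast_add_one_isEquivalent
  rw [← iteratedDeriv_one] at hderiv
  have hscaled := (IsEquivalent.refl (u := fun _ : ℕ =>
    ((ℓ * n).choose 2 - ℓ * n.choose 2 : ℂ))).mul
      ((digamma_natCast_add_one_isEquivalent.pow (ℓ * n - 2)).mul hderiv)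
  refine IsEquivalent.trans ?_ hscaled
  have hψ0 : ∀ᶠ k : ℕ in atTop, digamma (k + 1) ≠ 0 :=
    tendsto_digamma_natCast_add_one_cobounded.eventually_ne_cobounded 0
  have htwo : 2 ≤ ℓ * n := Nat.mul_le_mul hℓ hn
  refine (hdiff.mul (IsEquivalent.refl (u := fun k : ℕ => digamma (k + 1) ^ (ℓ * n)))).congr_left ?_
    |>.congr_right ?_
  · filter_upwards [hψ0] with k hk
    simp only [Pi.mul_apply, Pi.sub_apply, Pi.pow_apply]
    rw [sub_mul, div_mul_cancel₀ _ (pow_ne_zero _ hk), div_pow, ← pow_mul, mul_comm n ℓ,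
      div_mul_cancel₀ _ (pow_ne_zero _ hk)]
  · filter_upwards [hψ0] with k hk
    simp only [Pi.mul_apply, Pi.pow_apply]
    rw [← pow_sub_mul_pow (digamma (k + 1)) htwo]
    field_simp

end GammaDerivatives

section GrowthScale

open Asymptotics Filter Topology

variable {α ι κ : Type*} [Fintype ι] {l : Filter α} {L : ι → α → ℝ} {a b : ι → ℝ}

/-- The monomial `∏ i, (exp (L i)) ^ a i` in the exponentials of a family of functions, with real
exponents. When each `L i` tends to infinity and dominates its successors, the rates of growth of
these monomials are ordered as their exponent vectors are lexicographically. -/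
noncomputable def expMonomial (L : ι → α → ℝ) (a : ι → ℝ) (x : α) : ℝ :=
  Real.exp (∑ i, a i * L i x)

variable [LinearOrder ι]

theorem tendsto_sum_mul_atTop (hL : ∀ i, Tendsto (L i) l atTop)
    (hdom : ∀ ⦃i j⦄, i < j → L j =o[l] L i) {i : ι} (hzero : ∀ j < i, a j = 0) (hpos : 0 < a i) :
    Tendsto (fun x => ∑ j, a j * L j x) l atTop := by
  have hlead : Tendsto (fun x => a i * L i x) l atTop := (hL i).const_mul_atTop hpos
  have hrem : (fun x => ∑ j ∈ Finset.univ.erase i, a j * L j x) =o[l] fun x => a i * L i x := by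
    refine IsLittleO.fun_sum fun j hj => ?_
    rcases (Finset.ne_of_mem_erase hj).lt_or_gt with hji | hij
    · simp [hzero j hji]
    · exact ((hdom hij).const_mul_left _).const_mul_right hpos.ne'
  refine (IsEquivalent.refl.add_isLittleO hrem).symm.tendsto_atTop hlead |>.congr fun x => ?_
  exact Finset.add_sum_erase _ (fun j => a j * L j x) (Finset.mem_univ i)

theorem expMonomial_isLittleO (hL : ∀ i, Tendsto (L i) l atTop)
    (hdom : ∀ ⦃i j⦄, i < j → L j =o[l] L i) (hab : toLex a < toLex b) :
    expMonomial L a =o[l] expMonomial L b := by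
  obtain ⟨i, hzero, hpos⟩ := hab
  refine Real.isLittleO_exp_comp_exp_comp.mpr ?_
  refine (tendsto_sum_mul_atTop hL hdom (a := b - a) (i := i)
    (fun j hj => sub_eq_zero.mpr (hzero j hj).symm) (sub_pos.mpr hpos)).congr fun x => ?_
  simp only [Pi.sub_apply, sub_mul, Finset.sum_sub_distrib]

theorem eventually_sum_ne_zero_of_isEquivalent_expMonomial (hL : ∀ i, Tendsto (L i) l atTop)
    (hdom : ∀ ⦃i j⦄, i < j → L j =o[l] L i) {s : Finset κ} (hs : s.Nonempty) {a : κ → ι → ℝ}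
    (ha : Set.InjOn a s) {c : κ → ℂ} (hc : ∀ d ∈ s, c d ≠ 0) {f : κ → α → ℂ}
    (hf : ∀ d ∈ s, f d ~[l] fun x => c d * expMonomial L (a d) x) :
    ∀ᶠ x in l, ∑ d ∈ s, f d x ≠ 0 := by
  classical
  obtain ⟨d₀, hd₀, hmax⟩ := s.exists_max_image (fun d => toLex (a d)) hs
  have hrem : (fun x => ∑ d ∈ s.erase d₀, f d x) =o[l] f d₀ := by
    refine IsLittleO.fun_sum fun d hd => ?_
    obtain ⟨hne, hd⟩ := Finset.mem_erase.mp hd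
    have hlt : toLex (a d) < toLex (a d₀) :=
      (hmax d hd).lt_of_ne fun h => hne (ha hd hd₀ (toLex_inj.mp h))
    have hexp : (fun x => (expMonomial L (a d) x : ℂ)) =o[l]
        fun x => (expMonomial L (a d₀) x : ℂ) :=
      Complex.isLittleO_ofReal_left.mpr <| Complex.isLittleO_ofReal_right.mpr <|
        expMonomial_isLittleO hL hdom hlt
    exact (hf d hd).trans_isLittleO
      (((hexp.const_mul_left _).const_mul_right (hc d₀ hd₀)).trans_isEquivalent (hf d₀ hd₀).symm)
  have hsum : (fun x => ∑ d ∈ s, f d x) ~[l] fun x => c d₀ * expMonomial L (a d₀) x := by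
    refine (IsEquivalent.refl.add_isLittleO hrem).congr_left (.of_forall fun x => ?_) |>.trans
      (hf d₀ hd₀)
    exact Finset.add_sum_erase _ (fun d => f d x) hd₀
  obtain ⟨φ, hφ, heq⟩ := hsum.exists_eq_mul
  filter_upwards [heq, hφ.eventually_ne one_ne_zero] with x hx hφx
  rw [hx]
  exact mul_ne_zero hφx (mul_ne_zero (hc d₀ hd₀)
    (Complex.ofReal_ne_zero.mpr (Real.exp_pos _).ne'))

end GrowthScale

section FactorialScale

open Asymptotics Filter Topology

open scoped Nat

/-- Logarithms of the functions `k!`, `exp (k + 1)`, `k + 1` and `log (k + 1)` of `k`, in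
decreasing order of growth. -/
noncomputable def logScale : Fin 4 → ℕ → ℝ :=
  ![fun k => Real.log k !, fun k => k + 1, fun k => Real.log (k + 1),
    fun k => Real.log (Real.log (k + 1))]

theorem natCast_add_one_isLittleO_log_factorial :
    (fun k : ℕ => (k + 1 : ℝ)) =o[atTop] fun k => Real.log k ! := by
  refine IsLittleO.of_bound fun c hc => ?_
  have hlim : Tendsto (fun k : ℕ => Real.exp c⁻¹ * (Real.exp c⁻¹ ^ k / k !)) atTop (𝓝 0) := by
    simpa using (FloorSemiring.tendsto_pow_div_factorial_atTop (Real.exp c⁻¹)).const_mul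
      (Real.exp c⁻¹)
  filter_upwards [hlim.eventually_le_const one_pos] with k hk
  have hfact : (0 : ℝ) < k ! := by positivity
  rw [← mul_div_assoc, div_le_one hfact, ← pow_succ', ← Real.exp_nat_mul] at hk
  have hlog := (Real.le_log_iff_exp_le hfact).mpr hk
  rw [← div_eq_mul_inv, div_le_iff₀' hc, Nat.cast_add_one] at hlog
  rw [Real.norm_of_nonneg (by positivity)]
  exact hlog.trans (mul_le_mul_of_nonneg_left (le_abs_self _) hc.le)

theorem tendsto_natCast_add_one_atTop : Tendsto (fun k : ℕ => (k + 1 : ℝ)) atTop atTop :=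
  tendsto_atTop_add_const_right _ _ tendsto_natCast_atTop_atTop

theorem logScale_isLittleO ⦃i j : Fin 4⦄ (hij : i < j) : logScale j =o[atTop] logScale i := by
  have : IsTrans (ℕ → ℝ) fun f g => g =o[atTop] f := ⟨fun _ _ _ h h' => h'.trans h⟩
  refine (Fin.liftFun_iff_succ (fun f g : ℕ → ℝ => g =o[atTop] f)).mpr (fun i => ?_) hij
  fin_cases i
  · exact natCast_add_one_isLittleO_log_factorial
  · exact Real.isLittleO_log_id_atTop.comp_tendsto tendsto_natCast_add_one_atTop
  · exact Real.isLittleO_log_id_atTop.comp_tendsto tendsto_log_natCast_add_one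

theorem tendsto_logScale (i : Fin 4) : Tendsto (logScale i) atTop atTop := by
  fin_cases i
  · refine Real.tendsto_log_atTop.comp (tendsto_natCast_atTop_atTop.comp ?_)
    exact tendsto_atTop_mono Nat.self_le_factorial tendsto_id
  · exact tendsto_natCast_add_one_atTop
  · exact tendsto_log_natCast_add_one
  · exact Real.tendsto_log_atTop.comp tendsto_log_natCast_add_one

theorem expMonomial_logScale {N : ℕ} (hN : N ≠ 0) {k : ℕ} (hk : 1 ≤ k) (p q r : ℕ) :
    expMonomial logScale ![p, -Real.log N, -q, r] k =
      k ! ^ p * ((N : ℝ) ^ (k + 1))⁻¹ * (k + 1 : ℝ)⁻¹ ^ q * Real.log (k + 1) ^ r := by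
  have hlog : 0 < Real.log (k + 1) := Real.log_pos (by exact_mod_cast Nat.lt_add_one_of_le hk)
  have hexp {x : ℝ} (hx : 0 < x) (r : ℕ) : Real.exp (r * Real.log x) = x ^ r := by
    rw [Real.exp_nat_mul, Real.exp_log hx]
  rw [expMonomial, Fin.sum_univ_four, Real.exp_add, Real.exp_add, Real.exp_add]
  simp only [logScale, Matrix.cons_val]
  rw [hexp (by positivity), hexp hlog, neg_mul, neg_mul, Real.exp_neg, Real.exp_neg,
    hexp (by positivity), mul_comm (Real.log N), ← Nat.cast_add_one, hexp (by positivity), inv_pow]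

end FactorialScale

section Substitution

variable {σ : Type*}

/-- The substitution `v₀ = t`, `v₁ = t w`, `v₂ = t (y + w ^ ℓ)` in a polynomial in
`(u; v₀, v₁, v₂)`, producing a polynomial in `(t, w, y)` with coefficients in `ℂ[u]`. -/
noncomputable def ratioSubst (σ : Type*) (ℓ : ℕ) :
    MvPolynomial (σ ⊕ Fin 3) ℂ →ₐ[ℂ] MvPolynomial (Fin 3) (MvPolynomial σ ℂ) :=
  aeval (Sum.elim (fun i => C (X i)) ![X 0, X 0 * X 1, X 0 * (X 2 + X 1 ^ ℓ)])

theorem eval₂_ratioSubst (ℓ : ℕ) (Q : MvPolynomial (σ ⊕ Fin 3) ℂ) (u : σ → ℂ) (t w y : ℂ) :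
    eval₂ (eval u) ![t, w, y] (ratioSubst σ ℓ Q) =
      eval (Sum.elim u ![t, t * w, t * (y + w ^ ℓ)]) Q := by
  rw [← coe_eval₂Hom, ← AlgHom.coe_toRingHom, ← RingHom.comp_apply]
  refine RingHom.congr_fun (ringHom_ext (fun a => ?_) fun i => ?_) Q
  · simp [ratioSubst, MvPolynomial.algebraMap_apply]
  · rcases i with i | j
    · simp [ratioSubst]
    · fin_cases j <;> simp [ratioSubst]

theorem ratioSubst_injective (σ : Type*) (ℓ : ℕ) : Function.Injective (ratioSubst σ ℓ) := by
  refine (injective_iff_map_eq_zero _).mpr fun Q hQ => ?_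
  have hmul : X (Sum.inr 0) * Q = 0 := by
    refine MvPolynomial.funext fun v => ?_
    rw [map_mul, map_zero, eval_X, mul_eq_zero, or_iff_not_imp_left]
    intro hv
    have heval := eval₂_ratioSubst ℓ Q (v ∘ Sum.inl) (v (Sum.inr 0))
      (v (Sum.inr 1) / v (Sum.inr 0))
      (v (Sum.inr 2) / v (Sum.inr 0) - (v (Sum.inr 1) / v (Sum.inr 0)) ^ ℓ)
    rw [hQ, eval₂_zero, sub_add_cancel, mul_div_cancel₀ _ hv, mul_div_cancel₀ _ hv] at heval
    have helim : v = Sum.elim (v ∘ Sum.inl) ![v (Sum.inr 0), v (Sum.inr 1), v (Sum.inr 2)] := by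
      funext i
      rcases i with i | j
      · rfl
      · fin_cases j <;> rfl
    rw [helim]
    exact heval.symm
  exact (mul_eq_zero.mp hmul).resolve_left (X_ne_zero _)

end Substitution

section Independence

open Asymptotics Filter Complex

open scoped Nat

/-- The values at `z` of the coordinates `(t, w, y)` of `ratioSubst` when
`(v₀, v₁, v₂) = (Γ, Γ^{(n)}, Γ^{(ℓ n)})`. -/
noncomputable def gammaRatios (ℓ n : ℕ) (z : ℂ) : Fin 3 → ℂ :=
  ![Gamma z, iteratedDeriv n Gamma z / Gamma z,
    iteratedDeriv (ℓ * n) Gamma z / Gamma z - (iteratedDeriv n Gamma z / Gamma z) ^ ℓ]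

theorem eval₂_gammaRatios_ratioSubst {σ : Type*} (ℓ n : ℕ) {z : ℂ} (hz : Gamma z ≠ 0)
    (u : σ → ℂ) (Q : MvPolynomial (σ ⊕ Fin 3) ℂ) :
    eval₂ (eval u) (gammaRatios ℓ n z) (ratioSubst σ ℓ Q) =
      eval (Sum.elim u fun j => iteratedDeriv (![0, n, ℓ * n] j) Gamma z) Q := by
  rw [gammaRatios, eval₂_ratioSubst, sub_add_cancel, mul_div_cancel₀ _ hz, mul_div_cancel₀ _ hz]
  congr 3
  ext j
  fin_cases j <;> simp

theorem exists_prod_gammaRatios_isEquivalent {ℓ n : ℕ} (hℓ : 2 ≤ ℓ) (hn : 1 ≤ n)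
    (d : Fin 3 → ℕ) :
    ∃ c : ℂ, c ≠ 0 ∧ (fun k : ℕ => ∏ j, gammaRatios ℓ n (k + 1) j ^ d j) ~[atTop]
      fun k => c * ((k ! : ℂ) ^ d 0 * (k + 1 : ℂ)⁻¹ ^ d 2 *
        (Real.log (k + 1) : ℂ) ^ (n * d 1 + (ℓ * n - 2) * d 2)) := by
  refine ⟨_, pow_ne_zero (d 2) (choose_two_mul_sub_ne_zero hℓ hn), ?_⟩
  have hprod := ((IsEquivalent.refl (u := fun k : ℕ => (k ! : ℂ) ^ d 0)).mul
    ((iteratedDeriv_Gamma_div_isEquivalent n).pow (d 1))).mul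
      ((iteratedDeriv_Gamma_div_sub_pow_isEquivalent hℓ hn).pow (d 2))
  refine hprod.congr_left (.of_forall fun k => ?_) |>.congr_right (.of_forall fun k => ?_)
  · simp [Fin.prod_univ_three, gammaRatios, Gamma_nat_eq_factorial]
  · simp only [Pi.mul_apply, Pi.pow_apply, mul_pow, pow_add, pow_mul]
    ring

theorem exists_monomial_isEquivalent {ℓ m n : ℕ} (hℓ : 2 ≤ ℓ) (hn : 1 ≤ n)
    {P : MvPolynomial (Fin m) ℂ} (hP : P ≠ 0) (d : Fin 3 → ℕ) :
    ∃ N : ℕ, ∃ c : ℂ, c ≠ 0 ∧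
      (fun k : ℕ => eval (fun i : Fin m => iteratedDeriv i riemannZeta (k + 1)) P *
        ∏ j, gammaRatios ℓ n (k + 1) j ^ d j) ~[atTop]
      fun k => c * expMonomial logScale
        ![d 0, -Real.log N, -d 2, (n * d 1 + (ℓ * n - 2) * d 2 : ℕ)] k := by
  obtain ⟨N, hN, c, hc, hzeta⟩ := exists_eval_iteratedDeriv_riemannZeta_isEquivalent hP
  obtain ⟨c', hc', hgamma⟩ := exists_prod_gammaRatios_isEquivalent hℓ hn d
  refine ⟨N, c * c', mul_ne_zero hc hc', (hzeta.mul hgamma).congr_right ?_⟩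
  filter_upwards [eventually_ge_atTop 1] with k hk
  rw [expMonomial_logScale hN hk]
  push_cast
  simp only [Pi.mul_apply]
  ring

end Independence

end ZetaGamma

open ZetaGamma MvPolynomial Filter in
theorem homogeneous_vanishing_implies_zero_general {ℓ m n : ℕ} (hℓ : 2 ≤ ℓ) (hn : 1 ≤ n)
    (Q : MvPolynomial (Fin m ⊕ Fin 3) ℂ)
    (hQ : ∃ᶠ k : ℕ in Filter.atTop,
      MvPolynomial.eval (Sum.elim (fun i : Fin m => iteratedDeriv (i : ℕ) riemannZeta (k + 1))
        (fun j : Fin 3 => iteratedDeriv (![0, n, ℓ * n] j) Complex.Gamma (k + 1))) Q = 0) :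
    Q = 0 := by
  by_contra hQ0
  set P := ratioSubst (Fin m) ℓ Q
  have hP : P ≠ 0 := (map_ne_zero_iff _ (ratioSubst_injective _ ℓ)).mpr hQ0
  have hterm (d : Fin 3 →₀ ℕ) (hd : d ∈ P.support) :=
    exists_monomial_isEquivalent hℓ hn (mem_support_iff.mp hd) d
  choose! N c hc hequiv using hterm
  have hinj : Function.Injective fun d : Fin 3 →₀ ℕ =>
      ![(d 0 : ℝ), -Real.log (N d), -d 2, (n * d 1 + (ℓ * n - 2) * d 2 : ℕ)] := by
    intro d d' h
    have h0 : d 0 = d' 0 := Nat.cast_injective (R := ℝ) (congrFun h 0)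
    have h2 : d 2 = d' 2 := by simpa using congrFun h 2
    have h3 : n * d 1 + (ℓ * n - 2) * d 2 = n * d' 1 + (ℓ * n - 2) * d' 2 :=
      Nat.cast_injective (R := ℝ) (congrFun h 3)
    rw [h2] at h3
    have h1 : d 1 = d' 1 := Nat.eq_of_mul_eq_mul_left hn (Nat.add_right_cancel h3)
    ext j
    fin_cases j
    exacts [h0, h1, h2]
  have hne := eventually_sum_ne_zero_of_isEquivalent_expMonomial tendsto_logScale
    logScale_isLittleO (support_nonempty.mpr hP) hinj.injOn hc hequiv
  refine hQ (hne.mono fun k hk => ?_)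
  rwa [← eval₂_eq', eval₂_gammaRatios_ratioSubst] at hk
  exact Complex.Gamma_ne_zero (ne_neg_natCast_of_re_pos (by simpa using k.cast_add_one_pos))

/-- **Claim 2.2.** If a polynomial `Q(u₀,…,u_m; v₀,v₁,v₂)` with constant complex
coefficients is homogeneous of total degree `p` in the variables `(v₀,v₁,v₂)` and
satisfies `Q(ζ,…,ζ^{(m)}; Γ, Γ^{(n)}, Γ^{(ℓn)}) ≡ 0` on the domain of analyticity,
then `Q = 0`. -/
theorem homogeneous_vanishing_implies_zero (ℓ m n p : ℕ) (hℓ : 2 ≤ ℓ) (hn : 1 ≤ n)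
    (Q : MvPolynomial (Fin (m + 1) ⊕ Fin 3) ℂ)
    (hhom : Q.IsWeightedHomogeneous
      (Sum.elim (fun _ : Fin (m + 1) => (0 : ℕ)) (fun _ : Fin 3 => (1 : ℕ))) p)
    (hQ : ∀ z : ℂ, z ≠ 1 → (∀ k : ℕ, z ≠ -(k : ℂ)) →
      MvPolynomial.eval
        (Sum.elim (fun i : Fin (m + 1) => iteratedDeriv (i : ℕ) riemannZeta z)
          (fun j : Fin 3 => iteratedDeriv (![0, n, ℓ * n] j) Complex.Gamma z)) Q = 0) :
    Q = 0 := by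
  refine homogeneous_vanishing_implies_zero_general hℓ hn Q
    ((Filter.eventually_ge_atTop 1).mono fun k hk => hQ _ ?_ ?_).frequently
  · simpa using Nat.one_le_iff_ne_zero.mp hk
  · exact ZetaGamma.ne_neg_natCast_of_re_pos (by simpa using k.cast_add_one_pos)
end

section
/- Let m ≥ 0 be an integer and let P(u₀,…,u_m; v₀) be a polynomial in m+2 variables whose coefficients are polynomials in z ∈ ℂ, such that P(ζ(z), ζ'(z), …, ζ^{(m)}(z); Γ(z)) = 0 for every z ∈ ℂ at which ζ and Γ are analytic. Then P is the identically zero polynomial. -/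
/-!
On a vertical line far to the right, `Γ` decays faster than every power of `|z|`, while a
polynomial in `ζ, ζ', …` with constant coefficients is a Dirichlet series, hence bounded, and, if
it is not formally zero, also bounded away from zero, because its first nonzero term dominates.
Letting `z → ∞` along the line in a polynomial relation therefore forces the coefficient of the
lowest power of `Γ`, and in it the coefficient of the highest power of `z`, to vanish as a formal
Dirichlet series. It remains to see that the Dirichlet series `∑ (-log n)ʲ n⁻ˢ` are algebraically
independent. Formal Dirichlet series are power series in the variables `x_p = p⁻ˢ`, and the
constant terms of the Jacobian matrix of `ζ, ζ', …` with respect to finitely many `x_p` are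
`(-log p)ʲ`, a Vandermonde matrix with distinct nodes.
-/

open Filter Topology Asymptotics Bornology

section JacobianCriterion

open MvPolynomial

theorem derivation_aeval {R A M ι : Type*} [CommSemiring R] [CommSemiring A] [Algebra R A]
    [AddCommMonoid M] [Module R M] [Module A M] [Fintype ι] (D : Derivation R A M) (x : ι → A)
    (q : MvPolynomial ι R) :
    D (aeval x q) = ∑ i, aeval x (pderiv i q) • D (x i) := by
  classical
  induction q using MvPolynomial.induction_on with
  | C c => simp
  | add f g hf hg => simp [hf, hg, add_smul, Finset.sum_add_distrib]
  | mul_X f i hf =>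
    simp [hf, Derivation.leibniz, Pi.single_apply, add_smul, mul_smul, Finset.sum_add_distrib,
      Finset.smul_sum, ite_smul, apply_ite]

theorem totalDegree_pderiv_le {R ι : Type*} [CommSemiring R] (i : ι) (q : MvPolynomial ι R) :
    (pderiv i q).totalDegree ≤ q.totalDegree - 1 := by
  refine Finset.sup_le fun d hd => Nat.le_sub_one_of_lt ?_
  have hcoeff : q.coeff (d + Finsupp.single i 1) ≠ 0 := by
    rw [mem_support_iff, coeff_pderiv] at hd
    exact left_ne_zero_of_mul hd
  have := le_totalDegree (mem_support_iff.mpr hcoeff)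
  rw [Finsupp.sum_add_index' (by simp) (by simp), Finsupp.sum_single_index rfl] at this
  omega

theorem eq_C_of_forall_pderiv_eq_zero {R ι : Type*} [CommSemiring R] [NoZeroDivisors R]
    [CharZero R] {q : MvPolynomial ι R} (hq : ∀ i, pderiv i q = 0) : q = C (q.coeff 0) := by
  classical
  ext d
  rw [coeff_C]
  split_ifs with hd
  · rw [hd]
  obtain ⟨i, hi⟩ := Finsupp.ne_iff.mp (Ne.symm hd)
  have hle : Finsupp.single i 1 ≤ d := by simpa [Nat.one_le_iff_ne_zero] using hi
  have hcoeff := coeff_pderiv (i := i) q (d - Finsupp.single i 1)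
  rw [hq, coeff_zero, tsub_add_cancel_of_le hle] at hcoeff
  exact (mul_eq_zero.mp hcoeff.symm).resolve_right (Nat.cast_add_one_ne_zero _)

theorem algebraicIndependent_of_det_mem_nonZeroDivisors {R A ι : Type*} [CommRing R]
    [NoZeroDivisors R] [CharZero R] [CommRing A] [Algebra R A] [FaithfulSMul R A] [Fintype ι]
    [DecidableEq ι] (D : ι → Derivation R A A) (x : ι → A)
    (hdet : (Matrix.of fun i j => D i (x j)).det ∈ nonZeroDivisors A) :
    AlgebraicIndependent R x := by
  rw [algebraicIndependent_iff]
  intro q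
  induction hN : q.totalDegree using Nat.strong_induction_on generalizing q with
  | _ N ih =>
  intro hq
  have hgrad : (fun j => aeval x (pderiv j q)) = 0 := by
    refine Matrix.mulVec_injective_of_det_mem_nonZeroDivisors hdet (funext fun i => ?_)
    have hDi := derivation_aeval (D i) x q
    rw [hq, map_zero] at hDi
    simpa [Matrix.mulVec, dotProduct, mul_comm] using hDi.symm
  have hpderiv (j : ι) : pderiv j q = 0 := by
    rcases Nat.eq_zero_or_pos N with rfl | hpos
    · rw [totalDegree_eq_zero_iff_eq_C.mp hN, pderiv_C]
    · have := totalDegree_pderiv_le j q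
      exact ih _ (by omega) _ rfl (congrFun hgrad j)
  have hqC := eq_C_of_forall_pderiv_eq_zero hpderiv
  rw [hqC, aeval_C, FaithfulSMul.algebraMap_eq_zero_iff] at hq
  rw [hqC, hq, map_zero]

end JacobianCriterion

section PrimeDerivation

open ArithmeticFunction

variable {R : Type*} [CommSemiring R]

/-- The partial derivative `∂/∂x_p` of formal Dirichlet series, where `∑ a(n) n⁻ˢ` is read as a
power series in the variables `x_q = q⁻ˢ`, one for each prime `q`. It is a bare function here;
`primePDeriv` is the derivation. -/
def primePDerivFun (p : ℕ) (a : ArithmeticFunction R) : ArithmeticFunction R :=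
  ⟨fun n => padicValNat p (n * p) * a (n * p), by simp⟩

@[simp]
theorem primePDerivFun_apply (p : ℕ) (a : ArithmeticFunction R) (n : ℕ) :
    primePDerivFun p a n = padicValNat p (n * p) * a (n * p) := rfl

variable (p : ℕ) [hp : Fact p.Prime]

theorem primePDerivFun_mul_apply (a b : ArithmeticFunction R) {n : ℕ} (hn : n ≠ 0) :
    (primePDerivFun p a * b) n =
      ∑ x ∈ (n * p).divisorsAntidiagonal, padicValNat p x.1 * (a x.1 * b x.2) := by
  rw [mul_apply]
  refine Finset.sum_of_injOn (fun x => (x.1 * p, x.2)) ?_ ?_ ?_ fun _ _ => by simp [mul_assoc]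
  · rintro ⟨c, d⟩ - ⟨c', d'⟩ - h
    simpa [hp.out.ne_zero] using h
  · rintro ⟨c, d⟩ hx
    simp only [Finset.mem_coe, Nat.mem_divisorsAntidiagonal] at hx ⊢
    exact ⟨by rw [← hx.1]; ring, mul_ne_zero hn hp.out.ne_zero⟩
  · rintro ⟨c, d⟩ hx hx'
    have hndvd : ¬ p ∣ c := by
      rintro ⟨e, rfl⟩
      refine hx' ⟨(e, d), ?_, by simp [mul_comm]⟩
      simp only [Finset.mem_coe, Nat.mem_divisorsAntidiagonal] at hx ⊢
      exact ⟨Nat.eq_of_mul_eq_mul_left hp.out.pos (by linarith [hx.1]), hn⟩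
    simp [padicValNat.eq_zero_of_not_dvd hndvd]

theorem primePDerivFun_mul (a b : ArithmeticFunction R) :
    primePDerivFun p (a * b) = a * primePDerivFun p b + b * primePDerivFun p a := by
  ext n
  rcases eq_or_ne n 0 with rfl | hn
  · simp
  have hswap : (a * primePDerivFun p b) n =
      ∑ x ∈ (n * p).divisorsAntidiagonal, padicValNat p x.2 * (a x.1 * b x.2) := by
    rw [mul_comm, primePDerivFun_mul_apply p b a hn]
    exact Finset.sum_equiv (Equiv.prodComm ℕ ℕ) (by simp [mul_comm]) (by simp [mul_comm])
  rw [ArithmeticFunction.add_apply, hswap, mul_comm b, primePDerivFun_mul_apply p a b hn,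
    ← Finset.sum_add_distrib, primePDerivFun_apply, mul_apply, Finset.mul_sum]
  refine Finset.sum_congr rfl fun x hx => ?_
  rw [Nat.mem_divisorsAntidiagonal] at hx
  have hx0 : x.1 * x.2 ≠ 0 := hx.1.symm ▸ hx.2
  rw [← hx.1, padicValNat.mul (left_ne_zero_of_mul hx0) (right_ne_zero_of_mul hx0), Nat.cast_add,
    add_comm, add_mul]

/-- The derivation `∂/∂x_p` of the ring of formal Dirichlet series in the variables
`x_q = q⁻ˢ`. -/
def primePDeriv : Derivation R (ArithmeticFunction R) (ArithmeticFunction R) where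
  toFun := primePDerivFun p
  map_add' a b := by ext n; simp [mul_add]
  map_smul' c a := by ext n; simp [mul_left_comm]
  map_one_eq_zero' := by
    ext n
    have hne : n * p ≠ 1 := fun h => hp.out.ne_one (Nat.eq_one_of_mul_eq_one_left h)
    simp [one_apply_ne hne]
  leibniz' := primePDerivFun_mul p

theorem primePDeriv_apply_one (a : ArithmeticFunction R) : primePDeriv p a 1 = a p := by
  change primePDerivFun p a 1 = a p
  simp [hp.out.one_lt]

end PrimeDerivation

section PowerFamily

open ArithmeticFunction

/-- The leading coefficient `a(1)` of the formal Dirichlet series `∑ a(n) n⁻ˢ`, as a ring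
homomorphism. -/
def evalOneHom (R : Type*) [Semiring R] : ArithmeticFunction R →+* R where
  toFun a := a 1
  map_one' := by simp
  map_mul' := by simp
  map_zero' := by simp
  map_add' := by simp

theorem ppow_apply_of_ne_zero {R : Type*} [Semiring R] (f : ArithmeticFunction R) (k : ℕ) {n : ℕ}
    (hn : n ≠ 0) : f.ppow k n = f n ^ k := by
  rcases k.eq_zero_or_pos with rfl | hk
  · simp [hn]
  · exact ppow_apply hk

theorem algebraicIndependent_ppow {K : Type*} [Field K] [CharZero K] {f : ArithmeticFunction K}
    (hf : Set.InjOn f {p | p.Prime}) (m : ℕ) :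
    AlgebraicIndependent K fun j : Fin m => f.ppow j := by
  have hprime (i : ℕ) : Fact (Nat.nth Nat.Prime i).Prime := ⟨Nat.prime_nth_prime i⟩
  have : FaithfulSMul K (ArithmeticFunction K) :=
    (faithfulSMul_iff_algebraMap_injective K _).mpr
      (Function.LeftInverse.injective (g := evalOneHom K) algebraMap_apply_one)
  refine algebraicIndependent_of_det_mem_nonZeroDivisors
    (fun i : Fin m => primePDeriv (Nat.nth Nat.Prime i)) _ (IsUnit.mem_nonZeroDivisors ?_)
  have hvandermonde : (evalOneHom K).mapMatrix
      (Matrix.of fun i j : Fin m => primePDeriv (Nat.nth Nat.Prime i) (f.ppow j)) =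
      Matrix.vandermonde fun i : Fin m => f (Nat.nth Nat.Prime i) := by
    ext i j
    exact (primePDeriv_apply_one _ _).trans (ppow_apply_of_ne_zero f j (hprime i).out.ne_zero)
  rw [isUnit_iff_isUnit_apply_one, isUnit_iff_ne_zero]
  change evalOneHom K _ ≠ 0
  rw [RingHom.map_det, hvandermonde, Matrix.det_vandermonde_ne_zero_iff]
  intro i j hij
  have := hf (hprime i).out (hprime j).out hij
  exact Fin.ext (Nat.nth_injective Nat.infinite_setOfPred_prime this)

end PowerFamily

section LeadingTerms

open Polynomial

variable {α A 𝕜 : Type*} {l : Filter α}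

theorem superpolynomialDecay_mul_of_isBigO_one [NormedField 𝕜] {w g b : α → 𝕜}
    (hg : SuperpolynomialDecay l w g) (hb : b =O[l] (1 : α → ℝ)) :
    SuperpolynomialDecay l w (g * b) := fun n => by
  simpa [mul_assoc] using (hg n).zero_mul_isBoundedUnder_le
    ((isBigO_one_iff ℝ).mp hb)

variable [CommSemiring A] [NormedField 𝕜] {φ : α → A →+* 𝕜} {w g : α → 𝕜}

theorem superpolynomialDecay_mul_eval₂ (hφ : ∀ b, (φ · b) =O[l] (1 : α → ℝ))
    (hg : SuperpolynomialDecay l w g) (Q : A[X]) :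
    SuperpolynomialDecay l w fun a => g a * Q.eval₂ (φ a) (w a) := by
  induction Q using Polynomial.induction_on' with
  | add p q hp hq => exact (hp.add hq).congr fun a => by simp [eval₂_add, mul_add]
  | monomial n b =>
    exact ((superpolynomialDecay_mul_of_isBigO_one hg (hφ b)).mul_param_pow n).congr fun a => by
      simp [eval₂_monomial, mul_assoc]

theorem superpolynomialDecay_eval₂_coeff_zero (hφ : ∀ b, (φ · b) =O[l] (1 : α → ℝ))
    (hg : SuperpolynomialDecay l w g) {P : A[X][X]}
    (hP : ∀ᶠ a in l, P.eval₂ (eval₂RingHom (φ a) (w a)) (g a) = 0) :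
    SuperpolynomialDecay l w fun a => (P.coeff 0).eval₂ (φ a) (w a) := by
  have hrest (R : A[X][X]) : SuperpolynomialDecay l w fun a =>
      g a * R.eval₂ (eval₂RingHom (φ a) (w a)) (g a) := by
    induction R using Polynomial.induction_on' with
    | add p q hp hq => exact (hp.add hq).congr fun a => by simp [eval₂_add, mul_add]
    | monomial n Q =>
      have hpow : SuperpolynomialDecay l w (g ^ (n + 1)) := by
        induction n with
        | zero => simpa using hg
        | succ n ih => simpa only [pow_succ _ (n + 1)] using ih.mul hg
      refine (superpolynomialDecay_mul_eval₂ hφ hpow Q).congr fun a => ?_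
      rw [eval₂_monomial, coe_eval₂RingHom, Pi.pow_apply, pow_succ']
      ring
  refine ((hrest P.divX).const_mul (-1)).congr' ?_
  filter_upwards [hP] with a ha
  rw [← P.divX_mul_X_add, eval₂_add, eval₂_mul, eval₂_X, eval₂_C] at ha
  simp only [coe_eval₂RingHom] at ha
  linear_combination -ha

theorem superpolynomialDecay_eval₂_trailingCoeff (hφ : ∀ b, (φ · b) =O[l] (1 : α → ℝ))
    (hg : SuperpolynomialDecay l w g) (hg0 : ∀ᶠ a in l, g a ≠ 0) {P : A[X][X]}
    (hP : ∀ᶠ a in l, P.eval₂ (eval₂RingHom (φ a) (w a)) (g a) = 0) :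
    SuperpolynomialDecay l w fun a => P.trailingCoeff.eval₂ (φ a) (w a) := by
  obtain ⟨R, hR⟩ : X ^ P.natTrailingDegree ∣ P :=
    X_pow_dvd_iff.mpr fun _ => coeff_eq_zero_of_lt_natTrailingDegree
  have hcoeff : P.trailingCoeff = R.coeff 0 := by
    have := congrArg (coeff · P.natTrailingDegree) hR
    simpa [trailingCoeff, coeff_X_pow_mul'] using this
  rw [hcoeff]
  refine superpolynomialDecay_eval₂_coeff_zero hφ hg ?_
  filter_upwards [hP, hg0] with a ha hga
  rw [hR, eval₂_mul, eval₂_X_pow] at ha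
  exact (mul_eq_zero.mp ha).resolve_left (pow_ne_zero _ hga)

theorem tendsto_eval₂_coeff_zero (hφ : ∀ b, (φ · b) =O[l] (1 : α → ℝ)) (hw : Tendsto w l (𝓝 0))
    (Q : A[X]) : Tendsto (fun a => Q.eval₂ (φ a) (w a) - φ a (Q.coeff 0)) l (𝓝 0) := by
  induction Q using Polynomial.induction_on' with
  | add p q hp hq => simpa [eval₂_add, add_sub_add_comm] using hp.add hq
  | monomial n b =>
    rcases n with _ | n
    · simpa using tendsto_const_nhds
    have hpow : Tendsto (fun a => w a ^ (n + 1)) l (𝓝 0) := by simpa using hw.pow (n + 1)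
    simpa [eval₂_monomial, coeff_monomial, mul_comm] using
      hpow.zero_mul_isBoundedUnder_le ((isBigO_one_iff ℝ).mp (hφ b))

theorem tendsto_leadingCoeff_of_tendsto_eval₂ (hφ : ∀ b, (φ · b) =O[l] (1 : α → ℝ))
    (hw : Tendsto w l (cobounded 𝕜)) {Q : A[X]}
    (hQ : Tendsto (fun a => Q.eval₂ (φ a) (w a)) l (𝓝 0)) :
    Tendsto (fun a => φ a Q.leadingCoeff) l (𝓝 0) := by
  have hwinv : Tendsto (fun a => (w a)⁻¹) l (𝓝 0) := tendsto_inv₀_cobounded.comp hw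
  have hreverse : Tendsto (fun a => Q.reverse.eval₂ (φ a) (w a)⁻¹) l (𝓝 0) := by
    have := hQ.zero_mul_isBoundedUnder_le ((hwinv.pow Q.natDegree).norm.isBoundedUnder_le)
    refine this.congr' ?_
    filter_upwards [hw.eventually_ne_cobounded 0] with a ha
    have := invertibleOfNonzero ha
    rw [← eval₂_reverse_mul_pow (φ a) (w a) Q, invOf_eq_inv, mul_assoc, ← mul_pow,
      mul_inv_cancel₀ ha, one_pow, mul_one]
  simpa [coeff_zero_reverse] using hreverse.sub (tendsto_eval₂_coeff_zero hφ hwinv Q.reverse)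

theorem tendsto_leadingCoeff_trailingCoeff (hφ : ∀ b, (φ · b) =O[l] (1 : α → ℝ))
    (hw : Tendsto w l (cobounded 𝕜)) (hg : SuperpolynomialDecay l w g)
    (hg0 : ∀ᶠ a in l, g a ≠ 0) {P : A[X][X]}
    (hP : ∀ᶠ a in l, P.eval₂ (eval₂RingHom (φ a) (w a)) (g a) = 0) :
    Tendsto (fun a => φ a P.trailingCoeff.leadingCoeff) l (𝓝 0) :=
  tendsto_leadingCoeff_of_tendsto_eval₂ hφ hw
    (by simpa using superpolynomialDecay_eval₂_trailingCoeff hφ hg hg0 hP 0)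

end LeadingTerms

section Rearrangement

open MvPolynomial

/-- A polynomial in the variables `ι ⊕ τ`, where `τ` has a single element, with coefficients in
`R[X]`, read as a polynomial in the `τ`-variable over the polynomials in `X` over the polynomials
in the `ι`-variables. -/
noncomputable def iteratedPolynomialEquiv (R ι τ : Type*) [CommSemiring R] [Unique τ] :
    MvPolynomial (ι ⊕ τ) (Polynomial R) ≃+* Polynomial (Polynomial (MvPolynomial ι R)) :=
  ((renameEquiv (Polynomial R) (Equiv.sumComm ι τ)).trans
      (sumAlgEquiv (Polynomial R) τ ι)).toRingEquiv.trans <|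
    (uniqueAlgEquiv (MvPolynomial ι (Polynomial R)) τ).toRingEquiv.trans <|
      Polynomial.mapEquiv ((optionEquivRight R ι).symm.trans (optionEquivLeft R ι)).toRingEquiv

theorem eval₂_iteratedPolynomialEquiv {R ι τ : Type*} [CommSemiring R] [Unique τ] (u : ι → R)
    (z : R) (v : τ → R) (P : MvPolynomial (ι ⊕ τ) (Polynomial R)) :
    (iteratedPolynomialEquiv R ι τ P).eval₂ (Polynomial.eval₂RingHom (eval u) z) (v default) =
      P.eval₂ (Polynomial.evalRingHom z) (Sum.elim u v) := by
  suffices h : (Polynomial.eval₂RingHom (Polynomial.eval₂RingHom (eval u) z) (v default)).comp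
      (iteratedPolynomialEquiv R ι τ : _ →+* _) =
      eval₂Hom (Polynomial.evalRingHom z) (Sum.elim u v) from RingHom.congr_fun h P
  ext i
  · simp [iteratedPolynomialEquiv]
  · simp [iteratedPolynomialEquiv]
  · rcases i with i | i
    · simp [iteratedPolynomialEquiv]
    · simp [iteratedPolynomialEquiv, Unique.eq_default i]

end Rearrangement

section LSeriesBounds

open LSeries

theorem LSeriesSummable_norm_iff {f : ℕ → ℂ} {s : ℂ} :
    LSeriesSummable (fun n => (‖f n‖ : ℂ)) s ↔ LSeriesSummable f s := by
  rw [LSeriesSummable, LSeriesSummable, ← summable_norm_iff, ← summable_norm_iff (f := term f s)]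
  simp only [norm_term_eq, Complex.norm_real, norm_norm]

theorem abscissaOfAbsConv_norm (f : ℕ → ℂ) :
    abscissaOfAbsConv (fun n => (‖f n‖ : ℂ)) = abscissaOfAbsConv f := by
  simp only [abscissaOfAbsConv, LSeriesSummable_norm_iff]

theorem tsum_norm_term (f : ℕ → ℂ) (s : ℂ) :
    ∑' n, ‖term f s n‖ = ‖LSeries (fun n => (‖f n‖ : ℂ)) s.re‖ := by
  have hterm (n : ℕ) : (‖term f s n‖ : ℂ) = term (fun n => (‖f n‖ : ℂ)) s.re n := by
    rcases eq_or_ne n 0 with rfl | hn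
    · simp
    · rw [norm_term_eq, if_neg hn, term_of_ne_zero hn, Complex.ofReal_div,
        Complex.ofReal_cpow (Nat.cast_nonneg n), Complex.ofReal_natCast]
  rw [LSeries, ← tsum_congr hterm, ← Complex.ofReal_tsum, Complex.norm_real,
    Real.norm_of_nonneg (tsum_nonneg fun _ => norm_nonneg _)]

theorem norm_LSeries_le_norm_LSeries_norm {f : ℕ → ℂ} {s : ℂ} (hs : LSeriesSummable f s) :
    ‖LSeries f s‖ ≤ ‖LSeries (fun n => (‖f n‖ : ℂ)) s.re‖ :=
  (norm_tsum_le_tsum_norm hs.norm).trans_eq (tsum_norm_term f s)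

theorem two_mul_norm_le_norm_tsum_add_tsum_norm {ι E : Type*} [NormedAddCommGroup E]
    [CompleteSpace E] {u : ι → E} (hu : Summable (‖u ·‖)) (i : ι) :
    2 * ‖u i‖ ≤ ‖∑' j, u j‖ + ∑' j, ‖u j‖ := by
  classical
  have hsplit := hu.of_norm.tsum_eq_add_tsum_ite i
  have hsplit_norm := hu.tsum_eq_add_tsum_ite i
  have hrest : ‖∑' j, if j = i then 0 else u j‖ ≤ ∑' j, if j = i then 0 else ‖u j‖ := by
    refine tsum_of_norm_bounded (Summable.hasSum ?_) fun j => by split_ifs <;> simp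
    exact hu.of_nonneg_of_le (fun j => by split_ifs <;> simp) fun j => by split_ifs <;> simp
  have htri := norm_sub_le (∑' j, u j) (∑' j, if j = i then 0 else u j)
  rw [← eq_sub_of_add_eq hsplit.symm] at htri
  linarith

theorem exists_pos_le_norm_LSeries_of_lt_cpow_mul {f : ℕ → ℂ} {n : ℕ} {σ : ℝ}
    (hσ : abscissaOfAbsConv f < σ) (hn : n ≠ 0)
    (h : ‖(n : ℂ) ^ (σ : ℂ) * LSeries (fun k => (‖f k‖ : ℂ)) σ‖ < 2 * ‖f n‖) :
    ∃ c > 0, ∀ s : ℂ, s.re = σ → c ≤ ‖LSeries f s‖ := by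
  have hpos : 0 < (n : ℝ) ^ σ := Real.rpow_pos_of_pos (by positivity) σ
  rw [norm_mul, Complex.norm_natCast_cpow_of_pos (by omega), Complex.ofReal_re,
    ← lt_div_iff₀' hpos] at h
  refine ⟨_, sub_pos.mpr h, fun s hs => ?_⟩
  have hsum : LSeriesSummable f s :=
    LSeriesSummable_of_abscissaOfAbsConv_lt_re (hs.symm ▸ hσ)
  have hbound := two_mul_norm_le_norm_tsum_add_tsum_norm hsum.norm n
  rw [tsum_norm_term, norm_term_eq, if_neg hn, hs, ← mul_div_assoc] at hbound
  exact sub_le_iff_le_add.mpr hbound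

theorem eventually_exists_pos_le_norm_LSeries {a : ArithmeticFunction ℂ} (ha : a ≠ 0)
    (hconv : abscissaOfAbsConv a < ⊤) :
    ∀ᶠ σ : ℝ in atTop, ∃ c > 0, ∀ s : ℂ, s.re = σ → c ≤ ‖LSeries a s‖ := by
  classical
  have hex : ∃ n, a n ≠ 0 := by simpa [DFunLike.ext_iff] using ha
  obtain ⟨n, hn⟩ : ∃ n, Nat.find hex = n + 1 :=
    Nat.exists_eq_succ_of_ne_zero fun h => Nat.find_spec hex (by simp [h])
  have han : a (n + 1) ≠ 0 := hn ▸ Nat.find_spec hex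
  have hlim := tendsto_cpow_mul_atTop (f := fun k => (‖a k‖ : ℂ)) (n := n)
    (fun k hk => by simpa using Nat.find_min hex (hn ▸ Nat.lt_succ_of_le hk))
    ((abscissaOfAbsConv_norm a).trans_lt hconv)
  have hlt : ‖((‖a (n + 1)‖ : ℝ) : ℂ)‖ < 2 * ‖a (n + 1)‖ := by
    rw [Complex.norm_real, norm_norm]
    linarith [norm_pos_iff.mpr han]
  obtain ⟨x, hx, -⟩ := EReal.lt_iff_exists_real_btwn.mp hconv
  filter_upwards [hlim.norm.eventually_lt_const hlt, eventually_ge_atTop x] with σ hσ hxσ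
  exact exists_pos_le_norm_LSeries_of_lt_cpow_mul (n := n + 1)
    (hx.trans_le (EReal.coe_le_coe_iff.mpr hxσ)) n.succ_ne_zero (by exact_mod_cast hσ)

end LSeriesBounds

section Gamma

open Complex

theorem norm_Gamma_le {s : ℂ} (hs : 0 < s.re) : ‖Gamma s‖ ≤ Real.Gamma s.re := by
  rw [Gamma_eq_integral hs, GammaIntegral, Real.Gamma_eq_integral hs]
  refine (MeasureTheory.norm_integral_le_integral_norm _).trans_eq
    (MeasureTheory.setIntegral_congr_fun measurableSet_Ioi fun x hx => ?_)
  simp [norm_cpow_eq_rpow_re_of_pos hx, Real.abs_exp, -ofReal_exp]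

theorem norm_Gamma_mul_norm_pow_le {s : ℂ} (hs : 0 < s.re) (N : ℕ) :
    ‖Gamma s‖ * ‖s‖ ^ N ≤ Real.Gamma (s.re + N) := by
  induction N generalizing s with
  | zero => simpa using norm_Gamma_le hs
  | succ N ih =>
    have hs0 : s ≠ 0 := by rintro rfl; simp at hs
    have hnorm : ‖s‖ ≤ ‖s + 1‖ := by
      rw [← sq_le_sq₀ (norm_nonneg _) (norm_nonneg _), Complex.sq_norm, Complex.sq_norm,
        normSq_apply, normSq_apply, add_re, add_im, one_re, one_im, add_zero]
      nlinarith
    calc ‖Gamma s‖ * ‖s‖ ^ (N + 1) = ‖Gamma (s + 1)‖ * ‖s‖ ^ N := by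
          rw [Gamma_add_one s hs0, norm_mul]; ring
      _ ≤ ‖Gamma (s + 1)‖ * ‖s + 1‖ ^ N := by gcongr
      _ ≤ Real.Gamma ((s + 1).re + N) := ih (by simpa using by linarith)
      _ = Real.Gamma (s.re + ↑(N + 1)) := by congr 1; push_cast [add_re, one_re]; ring

end Gamma

section VerticalLine

/-- The filter of points tending to infinity on the vertical line `re s = σ`, in both
directions. -/
noncomputable def atInftyOnLine (σ : ℝ) : Filter ℂ := cobounded ℂ ⊓ 𝓟 {s | s.re = σ}

theorem tendsto_id_atInftyOnLine (σ : ℝ) : Tendsto id (atInftyOnLine σ) (cobounded ℂ) :=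
  tendsto_id'.mpr inf_le_left

theorem eventually_atInftyOnLine {σ : ℝ} {p : ℂ → Prop} (h : ∀ s : ℂ, s.re = σ → p s) :
    ∀ᶠ s in atInftyOnLine σ, p s :=
  mem_inf_of_right h

instance neBot_atInftyOnLine (σ : ℝ) : (atInftyOnLine σ).NeBot := by
  have hnorm : Tendsto (fun t : ℝ => ‖(σ + t * Complex.I : ℂ)‖) atTop atTop :=
    tendsto_atTop_mono (fun t => (le_abs_self t).trans (by
      simpa using Complex.abs_im_le_norm (σ + t * Complex.I))) tendsto_id
  have : Tendsto (fun t : ℝ => (σ + t * Complex.I : ℂ)) atTop (atInftyOnLine σ) :=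
    tendsto_inf.mpr ⟨tendsto_norm_atTop_iff_cobounded.mp hnorm,
      tendsto_principal.mpr (Eventually.of_forall fun t => by simp)⟩
  exact this.neBot

theorem superpolynomialDecay_Gamma {σ : ℝ} (hσ : 0 < σ) :
    SuperpolynomialDecay (atInftyOnLine σ) id Complex.Gamma := fun n => by
  have hinv : Tendsto (fun s : ℂ => s⁻¹) (atInftyOnLine σ) (𝓝 0) :=
    tendsto_inv₀_cobounded.comp (tendsto_id_atInftyOnLine σ)
  have hbounded : IsBoundedUnder (· ≤ ·) (atInftyOnLine σ)
      (norm ∘ fun s : ℂ => s ^ (n + 1) * Complex.Gamma s) := by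
    refine isBoundedUnder_of_eventually_le (a := Real.Gamma (σ + ↑(n + 1)))
      (eventually_atInftyOnLine fun s hs => ?_)
    have := norm_Gamma_mul_norm_pow_le (hs.symm ▸ hσ) (n + 1)
    rwa [hs, ← norm_pow, ← norm_mul, mul_comm] at this
  refine (hinv.zero_mul_isBoundedUnder_le hbounded).congr' ?_
  filter_upwards [(tendsto_id_atInftyOnLine σ).eventually_ne_cobounded 0] with s (hs : s ≠ 0)
  rw [id, pow_succ', mul_assoc, inv_mul_cancel_left₀ hs]

theorem isBigO_one_LSeries_atInftyOnLine {f : ℕ → ℂ} {σ : ℝ}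
    (hσ : LSeries.abscissaOfAbsConv f < σ) :
    LSeries f =O[atInftyOnLine σ] (1 : ℂ → ℝ) := by
  refine (isBigO_one_iff ℝ).mpr (isBoundedUnder_of_eventually_le
    (a := ‖LSeries (fun n => (‖f n‖ : ℂ)) σ‖) (eventually_atInftyOnLine fun s hs => ?_))
  have := norm_LSeries_le_norm_LSeries_norm
    (LSeriesSummable_of_abscissaOfAbsConv_lt_re (hs.symm ▸ hσ))
  rwa [hs] at this

end VerticalLine

section Independence

open MvPolynomial

theorem LSeriesHasSum_aeval {ι : Type*} {a : ι → ArithmeticFunction ℂ} {F : ι → ℂ} {s : ℂ}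
    (hF : ∀ i, LSeriesHasSum (a i) s (F i)) (q : MvPolynomial ι ℂ) :
    LSeriesHasSum (aeval a q) s (eval F q) := by
  induction q using MvPolynomial.induction_on with
  | C c =>
    have hone : LSeriesHasSum (1 : ArithmeticFunction ℂ) s 1 := by
      have hδ : ⇑(1 : ArithmeticFunction ℂ) = LSeries.delta := ArithmeticFunction.one_eq_delta
      rw [hδ]
      exact (hasSum_ite_eq (1 : ℕ) (1 : ℂ)).congr_fun (LSeries.term_delta s)
    rw [aeval_C, eval_C, Algebra.algebraMap_eq_smul_one]
    convert hone.smul c using 1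
    · rfl
    · exact (mul_one c).symm
  | add f g hf hg => rw [map_add, map_add]; exact hf.add hg
  | mul_X f i hf =>
    rw [map_mul, map_mul, aeval_X, eval_X]
    exact ArithmeticFunction.LSeriesHasSum_mul hf (hF i)

theorem eq_zero_of_eval₂_LSeries_Gamma_eq_zero {ι τ : Type*} [Unique τ]
    {a : ι → ArithmeticFunction ℂ} (ha : AlgebraicIndependent ℂ a) {F : ι → ℂ → ℂ} {x : ℝ}
    (hF : ∀ i (s : ℂ), x < s.re → LSeriesHasSum (a i) s (F i s))
    (P : MvPolynomial (ι ⊕ τ) (Polynomial ℂ))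
    (hP : ∀ s : ℂ, x < s.re → eval₂ (Polynomial.evalRingHom s)
      (Sum.elim (F · s) fun _ => Complex.Gamma s) P = 0) :
    P = 0 := by
  by_contra hP0
  have hsum (b : MvPolynomial ι ℂ) {s : ℂ} (hs : x < s.re) :
      LSeriesHasSum (aeval a b) s (eval (F · s) b) :=
    LSeriesHasSum_aeval (fun i => hF i s hs) b
  have hconv (b : MvPolynomial ι ℂ) : LSeries.abscissaOfAbsConv (aeval a b) ≤ x :=
    LSeries.abscissaOfAbsConv_le_of_forall_lt_LSeriesSummable fun y hy =>
      (hsum b (s := y) hy).LSeriesSummable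
  set q := (iteratedPolynomialEquiv ℂ ι τ P).trailingCoeff.leadingCoeff with hq
  have hq0 : aeval a q ≠ 0 := fun h =>
    hP0 (by simpa [hq] using ha.eq_zero_of_aeval_eq_zero q h)
  obtain ⟨σ, ⟨c, hc, hlower⟩, hσ⟩ := ((eventually_exists_pos_le_norm_LSeries hq0
    ((hconv q).trans_lt (EReal.coe_lt_top x))).and (eventually_gt_atTop (max x 0))).exists
  obtain ⟨hxσ, hσ0⟩ := max_lt_iff.mp hσ
  have heval (b : MvPolynomial ι ℂ) :
      LSeries (aeval a b) =ᶠ[atInftyOnLine σ] fun s => eval (F · s) b :=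
    eventually_atInftyOnLine fun s hs => (hsum b (hs.symm ▸ hxσ)).LSeries_eq
  have hbounded (b : MvPolynomial ι ℂ) :
      (fun s => eval (F · s) b) =O[atInftyOnLine σ] (1 : ℂ → ℝ) :=
    (isBigO_one_LSeries_atInftyOnLine
      ((hconv b).trans_lt (EReal.coe_lt_coe_iff.mpr hxσ))).congr' (heval b) .rfl
  have hlim : Tendsto (fun s => eval (F · s) q) (atInftyOnLine σ) (𝓝 0) :=
    tendsto_leadingCoeff_trailingCoeff hbounded (tendsto_id_atInftyOnLine σ)
      (superpolynomialDecay_Gamma hσ0)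
      (eventually_atInftyOnLine fun s hs => Complex.Gamma_ne_zero_of_re_pos (hs.symm ▸ hσ0))
      (eventually_atInftyOnLine fun s hs =>
        (eval₂_iteratedPolynomialEquiv _ s (fun _ => Complex.Gamma s) P).trans
          (hP s (hs.symm ▸ hxσ)))
  have hle := ge_of_tendsto (hlim.congr' (heval q).symm).norm (eventually_atInftyOnLine hlower)
  exact hc.not_ge (hle.trans_eq norm_zero)

end Independence

section Zeta

open ArithmeticFunction

/-- The arithmetic function `n ↦ -log n`; pointwise multiplication by it differentiates Dirichlet
series. -/
noncomputable def negLog : ArithmeticFunction ℂ := ⟨fun n => -Complex.log n, by simp⟩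

theorem negLog_apply (n : ℕ) : negLog n = -Complex.log n := rfl

theorem injOn_negLog : Set.InjOn negLog {n | n ≠ 0} := by
  intro m hm n hn h
  have hlog : Real.log m = Real.log n := by
    simpa [negLog_apply, ← Complex.natCast_log] using h
  exact_mod_cast Real.log_injOn_pos (Set.mem_Ioi.mpr (Nat.cast_pos.mpr (Nat.pos_of_ne_zero hm)))
    (Set.mem_Ioi.mpr (Nat.cast_pos.mpr (Nat.pos_of_ne_zero hn))) hlog

theorem LSeries_iterate_logMul_apply (f : ℕ → ℂ) (j n : ℕ) :
    (LSeries.logMul^[j] f) n = Complex.log n ^ j * f n := by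
  induction j with
  | zero => simp
  | succ j ih =>
    rw [Function.iterate_succ', Function.comp_apply, LSeries.logMul, ih, pow_succ', mul_assoc]

theorem LSeriesHasSum_ppow_negLog (j : ℕ) {s : ℂ} (hs : 1 < s.re) :
    LSeriesHasSum (negLog.ppow j) s (iteratedDeriv j riemannZeta s) := by
  have hconv : LSeries.abscissaOfAbsConv 1 < s.re := by
    rw [LSeries.abscissaOfAbsConv_one]
    exact_mod_cast hs
  have hzeta : LSeries 1 =ᶠ[𝓝 s] riemannZeta := by
    filter_upwards [(isOpen_lt continuous_const Complex.continuous_re).mem_nhds hs] with w hw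
    exact LSeries_one_eq_riemannZeta hw
  rw [← hzeta.iteratedDeriv_eq, LSeries_iteratedDeriv j hconv]
  have hsum : LSeriesSummable (LSeries.logMul^[j] 1) s :=
    LSeriesSummable_of_abscissaOfAbsConv_lt_re (by rwa [LSeries.absicssaOfAbsConv_logPowMul])
  refine (LSeriesHasSum_congr _ _ fun {n} hn => ?_).mp (hsum.LSeriesHasSum.smul ((-1) ^ j))
  rw [ppow_apply_of_ne_zero _ _ hn, negLog_apply, Pi.smul_apply, LSeries_iterate_logMul_apply,
    Pi.one_apply, mul_one, smul_eq_mul, ← mul_pow, neg_one_mul]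

theorem zeta_gamma_independence_no_derivatives_general (m : ℕ) (x : ℝ)
    (P : MvPolynomial (Fin m ⊕ Fin 1) (Polynomial ℂ))
    (hP : ∀ z : ℂ, x < z.re →
      MvPolynomial.eval₂ (Polynomial.evalRingHom z)
        (Sum.elim (fun i : Fin m => iteratedDeriv (i : ℕ) riemannZeta z)
          (fun _ : Fin 1 => Complex.Gamma z)) P = 0) :
    P = 0 :=
  eq_zero_of_eval₂_LSeries_Gamma_eq_zero (x := max x 1)
    (algebraicIndependent_ppow (injOn_negLog.mono fun _ hp => hp.ne_zero) m)
    (fun i _ hs => LSeriesHasSum_ppow_negLog i ((le_max_right x 1).trans_lt hs)) P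
    fun z hz => hP z ((le_max_left x 1).trans_lt hz)

end Zeta

/-- **The `n = 0` case.** If `P(u₀,…,u_m; v₀)` is a polynomial with polynomial
coefficients in `z` such that `P(ζ(z),…,ζ^{(m)}(z); Γ(z)) = 0` for all `z ≠ 1` not a
nonpositive integer, then `P = 0`. -/
theorem zeta_gamma_independence_no_derivatives (m : ℕ)
    (P : MvPolynomial (Fin (m + 1) ⊕ Fin 1) (Polynomial ℂ))
    (hP : ∀ z : ℂ, z ≠ 1 → (∀ k : ℕ, z ≠ -(k : ℂ)) →
      MvPolynomial.eval₂ (Polynomial.evalRingHom z)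
        (Sum.elim (fun i : Fin (m + 1) => iteratedDeriv (i : ℕ) riemannZeta z)
          (fun _ : Fin 1 => Complex.Gamma z)) P = 0) :
    P = 0 := by
  refine zeta_gamma_independence_no_derivatives_general (m + 1) 1 P fun z hz => hP z ?_ fun k => ?_
  · rintro rfl
    exact hz.ne rfl
  · rintro rfl
    refine hz.not_ge ?_
    simpa using (neg_nonpos.mpr k.cast_nonneg).trans zero_le_one
end
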